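/- arXiv:1606.01715 — 3 statements merged into one kernel-verified Lean document; each statement's English description precedes it below -/
import Mathlib

section
/- ∑_{p prime : α(p) ≤ x} e_p log p = (3 log r)/π² · x² + O(x log x) as x → ∞, where e_p is the exact power of p dividing a_{α(p)} and r = (1+√5)/2. -/
open Finset Filter Asymptotics

noncomputable def fibAlpha (n : ℕ) : ℕ := sInf {m | 0 < m ∧ n ∣ Nat.fib m}

/-- `e_p`: the exact power of `p` dividing `fib (α p)`. -/
noncomputable def fibE (p : ℕ) : ℕ := (Nat.fib (fibAlpha p)).factorization p

/-!
Write `L(N)` for the least common multiple of `fib 1, …, fib N`.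

If `α(p) ∣ n`, say `n = α(p) k`, then lifting the exponent in `ℤ[φ]` shows that the exponent of `p`
in `fib n` exceeds `e_p` by at most twice the exponent of `p` in `k` (twice only if `p = 2`).
Hence `P(N) := ∏ p ^ e_p`, over the primes `p` with `α(p) ≤ N`, satisfies
`P(N) ∣ L(N) ∣ P(N) (N!)²`, so `log P(N)`, the sum to be estimated, is `log L(N) + O(N log N)`.

A prime power divides `L(N)` exactly when its rank of apparition is positive and at most `N`.
Grouping prime powers by rank gives `log L(N) = ∑ d ≤ N, g d` and `log (fib n) = ∑ d ∣ n, g d` with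
`g d := ∑ Λ q` over the `q` of rank `d`. As `log (fib n) = n log φ + O(1)`, Möbius inversion and
`∑ μ(m) / m² = 6 / π²` yield `log L(N) = (3 log φ / π²) N² + O(N log N)`.
-/

section LiftingTheExponent

open QuadraticAlgebra

/-- The ring `ℤ[φ]` of golden integers: here `ω ^ 2 = ω + 1`, so `ω` plays the role of the golden
ratio, and Fibonacci numbers are the `ω`-coordinates of the powers of `ω`. -/
abbrev GoldenInt : Type := QuadraticAlgebra ℤ 1 1

lemma omega_pow_eq_fib (n : ℕ) :
    (ω : GoldenInt) ^ n = Nat.fib (n + 1) + Nat.fib n * ((ω : GoldenInt) - 1) := by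
  induction n with
  | zero => simp
  | succ n ih =>
    have omega_sq : (ω : GoldenInt) * ω = 1 + ω := by simp [omega_mul_omega_eq_add]
    rw [pow_succ, ih, Nat.fib_add_two]
    push_cast
    linear_combination (Nat.fib n : GoldenInt) * omega_sq

lemma dvd_fib_mul_sub_of_dvd_omega_pow_sub {m k : ℕ} {e c d : ℤ}
    (h : (e : GoldenInt) ∣
      ((ω : GoldenInt) ^ m) ^ k - (c * (Nat.fib m * ((ω : GoldenInt) - 1)) + d)) :
    e ∣ Nat.fib (m * k) - c * Nat.fib m := by
  rw [← pow_mul, omega_pow_eq_fib] at h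
  have him := (algebraMap_dvd_iff.mp (show algebraMap ℤ GoldenInt e ∣ _ from h)).2
  simpa using him

lemma fib_sq_dvd_fib_mul_sub (m k : ℕ) :
    (Nat.fib m ^ 2 : ℤ) ∣ Nat.fib (m * k) - k * Nat.fib (m + 1) ^ (k - 1) * Nat.fib m := by
  apply dvd_fib_mul_sub_of_dvd_omega_pow_sub (d := Nat.fib (m + 1) ^ k)
  have hdvd := sq_dvd_add_pow_sub_sub (Nat.fib m * ((ω : GoldenInt) - 1)) (Nat.fib (m + 1)) k
  rw [← omega_pow_eq_fib] at hdvd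
  push_cast
  rw [mul_pow] at hdvd
  convert (dvd_mul_right _ _).trans hdvd using 1
  ring

lemma sq_mul_fib_dvd_fib_mul_sub {m n : ℕ} (hn : Odd n) (h : n ∣ Nat.fib m) :
    (n ^ 2 * Nat.fib m : ℤ) ∣
      Nat.fib (m * n) - n * Nat.fib (m + 1) ^ (n - 1) * Nat.fib m := by
  apply dvd_fib_mul_sub_of_dvd_omega_pow_sub (d := Nat.fib (m + 1) ^ n)
  obtain ⟨t, ht⟩ := h
  have omega_pow : (ω : GoldenInt) ^ m = Nat.fib (m + 1) + n * (t * ((ω : GoldenInt) - 1)) := by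
    rw [omega_pow_eq_fib, ht]
    push_cast
    ring
  have hgeom := geom_sum₂_mul ((ω : GoldenInt) ^ m) (Nat.fib (m + 1)) n
  obtain ⟨z, hz⟩ := odd_sq_dvd_geom_sum₂_sub
    (Nat.fib (m + 1) : GoldenInt) (t * ((ω : GoldenInt) - 1)) hn
  rw [← omega_pow] at hz
  refine ⟨z * ((ω : GoldenInt) - 1), ?_⟩
  have hsub : (ω : GoldenInt) ^ m - Nat.fib (m + 1) = Nat.fib m * ((ω : GoldenInt) - 1) := by
    rw [omega_pow_eq_fib]
    ring
  rw [hsub] at hgeom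
  push_cast
  linear_combination (Nat.fib m * ((ω : GoldenInt) - 1)) * hz - hgeom

lemma factorization_lt_add_of_dvd_sub {p e x y : ℕ} {c : ℤ} (hp : p.Prime)
    (h : (p ^ e * y : ℤ) ∣ x - c * y) (hc : ¬ (p ^ e : ℤ) ∣ c) :
    x.factorization p < y.factorization p + e := by
  obtain rfl | hy := eq_or_ne y 0
  · have he : e ≠ 0 := by rintro rfl; simp at hc
    obtain rfl : x = 0 := by simpa using h
    simpa using he.pos
  by_contra! hle
  have hxdvd : (p ^ (y.factorization p + e) : ℤ) ∣ x := by
    exact_mod_cast (pow_dvd_pow p hle).trans (Nat.ordProj_dvd x p)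
  obtain ⟨v, w, hw, rfl⟩ := Nat.exists_eq_pow_mul_and_not_dvd hy p hp.ne_one
  have hv : (p ^ v * w).factorization p = v := by
    rw [Nat.factorization_mul (by positivity [hp.pos]) (by grind)]
    simp [hp.factorization_self, Nat.factorization_eq_zero_of_not_dvd hw]
  rw [hv] at hxdvd
  push_cast at h
  have hcy : (p ^ v * p ^ e : ℤ) ∣ p ^ v * (c * w) := by
    rw [← pow_add, mul_left_comm]
    exact (dvd_sub_right hxdvd).mp ((Dvd.intro (w : ℤ) (by ring)).trans h)
  have hcw := Int.dvd_of_mul_dvd_mul_left (pow_ne_zero v (by exact_mod_cast hp.ne_zero)) hcy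
  exact hc ((Nat.prime_iff_prime_int.mp hp).pow_dvd_of_dvd_mul_right _ (by exact_mod_cast hw) hcw)

lemma not_dvd_fib_succ_pow {p m : ℕ} (hp : p.Prime) (h : p ∣ Nat.fib m) (n : ℕ) :
    ¬ p ∣ Nat.fib (m + 1) ^ n := fun hdvd =>
  hp.not_dvd_one <| Nat.fib_coprime_fib_succ m ▸ Nat.dvd_gcd h (hp.dvd_of_dvd_pow hdvd)

lemma factorization_fib_mul_le_of_not_dvd {p m k : ℕ} (hp : p.Prime) (h : p ∣ Nat.fib m)
    (hpk : ¬ p ∣ k) :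
    (Nat.fib (m * k)).factorization p ≤ (Nat.fib m).factorization p := by
  refine Nat.lt_succ_iff.mp <| factorization_lt_add_of_dvd_sub (e := 1) hp
    (dvd_trans ?_ (fib_sq_dvd_fib_mul_sub m k)) ?_
  · rw [pow_one, sq]
    exact_mod_cast Nat.mul_dvd_mul_right h _
  · rw [pow_one]
    exact_mod_cast hp.not_dvd_mul hpk (not_dvd_fib_succ_pow hp h _)

lemma factorization_fib_mul_self_le_of_odd {p m : ℕ} (hp : p.Prime) (hodd : Odd p)
    (h : p ∣ Nat.fib m) :
    (Nat.fib (m * p)).factorization p ≤ (Nat.fib m).factorization p + 1 := by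
  refine Nat.lt_succ_iff.mp <| factorization_lt_add_of_dvd_sub (e := 2) hp
    (sq_mul_fib_dvd_fib_mul_sub hodd h) ?_
  rw [sq]
  exact_mod_cast fun hdvd => not_dvd_fib_succ_pow hp h _ (Nat.dvd_of_mul_dvd_mul_left hp.pos hdvd)

lemma fib_succ_sq_sub_mul_sub_sq (m : ℕ) :
    (Nat.fib (m + 1) ^ 2 - Nat.fib (m + 1) * Nat.fib m - Nat.fib m ^ 2 : ℤ) = (-1) ^ m := by
  induction m with
  | zero => simp
  | succ m ih =>
    rw [Nat.fib_add_two, pow_succ]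
    push_cast
    linear_combination -ih

lemma not_eight_dvd_two_mul_fib_succ_sub_fib (m : ℕ) :
    ¬ (8 : ℤ) ∣ 2 * Nat.fib (m + 1) - Nat.fib m := by
  intro h
  have hcassini := congrArg (Int.cast : ℤ → ZMod 8) (fib_succ_sq_sub_mul_sub_sq m)
  have hfib := (ZMod.intCast_zmod_eq_zero_iff_dvd _ 8).mpr h
  have no_root : ∀ x : ZMod 8, x ^ 2 - x * (2 * x) - (2 * x) ^ 2 ≠ 1 ∧
      x ^ 2 - x * (2 * x) - (2 * x) ^ 2 ≠ -1 := by decide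
  push_cast at hcassini hfib
  rw [← sub_eq_zero.mp hfib] at hcassini
  rcases neg_one_pow_eq_or (ZMod 8) m with hsign | hsign <;> rw [hsign] at hcassini
  · exact (no_root _).1 hcassini
  · exact (no_root _).2 hcassini

lemma factorization_two_fib_mul_two_le (m : ℕ) :
    (Nat.fib (m * 2)).factorization 2 ≤ (Nat.fib m).factorization 2 + 2 := by
  have hfib : (Nat.fib (m * 2) : ℤ) = (2 * Nat.fib (m + 1) - Nat.fib m) * Nat.fib m := by
    rw [mul_comm m, Nat.fib_two_mul, Nat.cast_mul,
      Nat.cast_sub (Nat.fib_le_fib_succ.trans (Nat.le_mul_of_pos_left _ two_pos))]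
    push_cast
    ring
  refine Nat.lt_succ_iff.mp <| factorization_lt_add_of_dvd_sub (e := 3) Nat.prime_two
    (sub_eq_zero.mpr hfib ▸ dvd_zero _) ?_
  exact_mod_cast not_eight_dvd_two_mul_fib_succ_sub_fib m

lemma factorization_fib_mul_prime_le {p q m : ℕ} (hp : p.Prime) (hq : q.Prime)
    (h : p ∣ Nat.fib m) :
    (Nat.fib (m * q)).factorization p ≤ (Nat.fib m).factorization p + 2 * q.factorization p := by
  obtain rfl | hpq := eq_or_ne p q
  · rw [hp.factorization_self]
    obtain rfl | hodd := hp.eq_two_or_odd'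
    · exact factorization_two_fib_mul_two_le m
    · have := factorization_fib_mul_self_le_of_odd hp hodd h
      lia
  · exact (factorization_fib_mul_le_of_not_dvd hp h
      (mt (Nat.prime_dvd_prime_iff_eq hp hq).mp hpq)).trans (Nat.le_add_right _ _)

lemma factorization_fib_mul_le {p m : ℕ} (hp : p.Prime) (h : p ∣ Nat.fib m) (k : ℕ) :
    (Nat.fib (m * k)).factorization p ≤ (Nat.fib m).factorization p + 2 * k.factorization p := by
  induction k using Nat.recOnMul generalizing m with
  | zero => simp
  | one => simp
  | prime q hq => exact factorization_fib_mul_prime_le hp hq h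
  | mul a b iha ihb =>
    obtain rfl | ha := eq_or_ne a 0
    · simp
    obtain rfl | hb := eq_or_ne b 0
    · simp
    have hdvd : p ∣ Nat.fib (m * a) := h.trans (Nat.fib_dvd m _ (dvd_mul_right m a))
    calc (Nat.fib (m * (a * b))).factorization p
        ≤ (Nat.fib (m * a)).factorization p + 2 * b.factorization p := by
          rw [← mul_assoc]
          exact ihb hdvd
      _ ≤ (Nat.fib m).factorization p + 2 * a.factorization p + 2 * b.factorization p := by
          gcongr
          exact iha h
      _ = (Nat.fib m).factorization p + 2 * (a * b).factorization p := by
          rw [Nat.factorization_mul ha hb, Finsupp.add_apply]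
          ring

end LiftingTheExponent

section RankOfApparition

open ArithmeticFunction Nat

variable {a : ℕ → ℕ} {q n : ℕ}

/-- The rank of apparition of `q` in the sequence `a`: the least positive index of a term divisible
by `q`. It is `0` when there is no such index. -/
noncomputable def rankOfApparition (a : ℕ → ℕ) (q : ℕ) : ℕ := sInf {m | 0 < m ∧ q ∣ a m}

lemma rankOfApparition_pos (hn : 0 < n) (h : q ∣ a n) : 0 < rankOfApparition a q :=
  (Nat.sInf_mem (⟨n, hn, h⟩ : {m | 0 < m ∧ q ∣ a m}.Nonempty)).1

lemma rankOfApparition_le (hn : 0 < n) (h : q ∣ a n) : rankOfApparition a q ≤ n :=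
  Nat.sInf_le ⟨hn, h⟩

lemma dvd_apply_rankOfApparition (h : 0 < rankOfApparition a q) :
    q ∣ a (rankOfApparition a q) :=
  (Nat.sInf_mem (Nat.nonempty_of_pos_sInf h)).2

lemma rankOfApparition_dvd (ha : IsStrongDvdSequence a) (hn : 0 < n) (h : q ∣ a n) :
    rankOfApparition a q ∣ n := by
  have hpos := rankOfApparition_pos hn h
  have hgcd : q ∣ a ((rankOfApparition a q).gcd n) := by
    rw [← ha]
    exact Nat.dvd_gcd (dvd_apply_rankOfApparition hpos) h
  have hle := rankOfApparition_le (Nat.gcd_pos_of_pos_left _ hpos) hgcd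
  exact Nat.gcd_eq_left_iff_dvd.mp (le_antisymm (Nat.gcd_le_left _ hpos) hle)

/-- The sum of the von Mangoldt function over the divisors of `a d` which divide no earlier term of
positive index. When `a` is a strong divisibility sequence, this is the logarithm of the primitive
part of `a d`. -/
noncomputable def logPrimitivePart (a : ℕ → ℕ) (d : ℕ) : ℝ :=
  ∑ q ∈ (a d).divisors with rankOfApparition a q = d, vonMangoldt q

lemma sum_divisors_logPrimitivePart (ha : IsStrongDvdSequence a) (hpos : ∀ m, 0 < m → a m ≠ 0)
    (hn : 0 < n) : ∑ d ∈ n.divisors, logPrimitivePart a d = Real.log (a n) := by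
  have hmaps : ∀ q ∈ (a n).divisors, rankOfApparition a q ∈ n.divisors := fun q hq =>
    mem_divisors.mpr ⟨rankOfApparition_dvd ha hn (dvd_of_mem_divisors hq), hn.ne'⟩
  rw [← vonMangoldt_sum, ← sum_fiberwise_of_maps_to hmaps]
  refine sum_congr rfl fun d hd => sum_congr ?_ fun _ _ => rfl
  have hd_pos := pos_of_mem_divisors hd
  have hdvd : a d ∣ a n := ha.isDvdSequence _ _ (dvd_of_mem_divisors hd)
  ext q
  simp only [mem_filter, mem_divisors, and_congr_left_iff]
  rintro rfl
  exact ⟨fun h => ⟨h.1.trans hdvd, hpos n hn⟩,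
    fun _ => ⟨dvd_apply_rankOfApparition hd_pos, hpos _ hd_pos⟩⟩

lemma exists_dvd_of_isPrimePow_of_dvd_lcm {ι : Type*} {s : Finset ι} {f : ι → ℕ}
    (hf : ∀ i ∈ s, f i ≠ 0) (hq : IsPrimePow q) (h : q ∣ s.lcm f) : ∃ i ∈ s, q ∣ f i := by
  obtain ⟨p, k, hp, hk, rfl⟩ := (isPrimePow_nat_iff q).mp hq
  rw [hp.pow_dvd_iff_le_factorization (Finset.lcm_ne_zero_iff.mpr hf),
    Finset.factorization_lcm hf, Finset.le_sup_iff hk] at h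
  obtain ⟨i, hi, hle⟩ := h
  exact ⟨i, hi, (hp.pow_dvd_iff_le_factorization (hf i hi)).mpr hle⟩

lemma sum_Ioc_logPrimitivePart (hpos : ∀ m, 0 < m → a m ≠ 0) (N : ℕ) :
    ∑ d ∈ Ioc 0 N, logPrimitivePart a d = Real.log ((Ioc 0 N).lcm a : ℕ) := by
  set L := (Ioc 0 N).lcm a
  have hne : ∀ d ∈ Ioc 0 N, a d ≠ 0 := fun d hd => hpos d (mem_Ioc.mp hd).1
  have hmaps : ∀ q ∈ {q ∈ L.divisors | IsPrimePow q}, rankOfApparition a q ∈ Ioc 0 N := by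
    intro q hq
    obtain ⟨hqL, hq⟩ := mem_filter.mp hq
    obtain ⟨d, hd, hqd⟩ := exists_dvd_of_isPrimePow_of_dvd_lcm hne hq (dvd_of_mem_divisors hqL)
    obtain ⟨hd_pos, hdN⟩ := mem_Ioc.mp hd
    exact mem_Ioc.mpr
      ⟨rankOfApparition_pos hd_pos hqd, (rankOfApparition_le hd_pos hqd).trans hdN⟩
  rw [← vonMangoldt_sum,
    ← sum_filter_of_ne (p := IsPrimePow) (fun q _ => vonMangoldt_ne_zero_iff.mp),
    ← sum_fiberwise_of_maps_to hmaps]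
  refine sum_congr rfl fun d hd => (sum_subset ?_ ?_).symm
  · intro q hq
    simp only [mem_filter, mem_divisors] at hq ⊢
    obtain ⟨-, rfl⟩ := hq
    exact ⟨⟨dvd_apply_rankOfApparition (mem_Ioc.mp hd).1, hne _ hd⟩, rfl⟩
  · intro q hq hq'
    simp only [mem_filter, mem_divisors] at hq hq'
    by_contra hΛ
    exact hq' ⟨⟨⟨hq.1.1.trans (dvd_lcm hd), Finset.lcm_ne_zero_iff.mpr hne⟩,
      vonMangoldt_ne_zero_iff.mp hΛ⟩, hq.2⟩

end RankOfApparition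

section MoebiusSums

open ArithmeticFunction

lemma hasSum_moebius_div_sq :
    HasSum (fun n : ℕ => (moebius n : ℝ) / n ^ 2) (6 / Real.pi ^ 2) := by
  have hs : 1 < (2 : ℂ).re := by norm_num
  have hvalue : LSeries (fun n => ((moebius n : ℤ) : ℂ)) 2 = ((6 / Real.pi ^ 2 : ℝ) : ℂ) := by
    have hmul := LSeries_one_mul_Lseries_moebius hs
    rw [LSeries_one_eq_riemannZeta hs, riemannZeta_two] at hmul
    have hpi : (Real.pi : ℂ) ≠ 0 := by exact_mod_cast Real.pi_ne_zero
    push_cast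
    field_simp at hmul ⊢
    linear_combination hmul
  have hsum := (LSeriesSummable_moebius_iff.mpr hs).hasSum
  rw [← LSeries, hvalue] at hsum
  rw [← Complex.hasSum_ofReal]
  refine hsum.congr_fun fun n => ?_
  obtain rfl | hn := eq_or_ne n 0
  · simp
  · rw [LSeries.term_of_ne_zero hn]
    norm_cast

lemma abs_sum_Ioc_sub_le_of_hasSum {f : ℕ → ℝ} {s : ℝ} (hf : HasSum f s)
    (hbound : ∀ n : ℕ, |f n| ≤ ((n : ℝ) ^ 2)⁻¹) {N : ℕ} (hN : N ≠ 0) :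
    |∑ n ∈ Ioc 0 N, f n - s| ≤ (N : ℝ)⁻¹ := by
  have hf0 : f 0 = 0 := by simpa using hbound 0
  have hpartial (M : ℕ) : ∑ n ∈ range (M + 1), f n = ∑ n ∈ Ioc 0 M, f n := by
    rw [range_eq_Ico, sum_eq_sum_Ico_succ_bot M.succ_pos, hf0, zero_add]
    rfl
  have hlim : Tendsto (fun M => |∑ n ∈ Ioc 0 N, f n - ∑ n ∈ Ioc 0 M, f n|) atTop
      (nhds |∑ n ∈ Ioc 0 N, f n - s|) := by
    simp_rw [← hpartial]
    exact (tendsto_const_nhds.sub (hf.tendsto_sum_nat.comp (tendsto_add_atTop_nat 1))).abs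
  refine le_of_tendsto hlim ?_
  filter_upwards [eventually_ge_atTop N] with M hM
  rw [← sum_Ioc_consecutive f N.zero_le hM, sub_add_cancel_left, abs_neg]
  calc |∑ n ∈ Ioc N M, f n|
      ≤ ∑ n ∈ Ioc N M, ((n : ℝ) ^ 2)⁻¹ :=
        (abs_sum_le_sum_abs _ _).trans (sum_le_sum fun n _ => hbound n)
    _ ≤ (N : ℝ)⁻¹ - (M : ℝ)⁻¹ := sum_Ioc_inv_sq_le_sub hN hM
    _ ≤ (N : ℝ)⁻¹ := sub_le_self _ (by positivity)

lemma abs_moebius_cast_le_one (n : ℕ) : |(moebius n : ℝ)| ≤ 1 := by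
  exact_mod_cast abs_moebius_le_one (n := n)

lemma abs_sum_moebius_div_sq_sub_le {N : ℕ} (hN : N ≠ 0) :
    |∑ n ∈ Ioc 0 N, (moebius n : ℝ) / n ^ 2 - 6 / Real.pi ^ 2| ≤ (N : ℝ)⁻¹ := by
  refine abs_sum_Ioc_sub_le_of_hasSum hasSum_moebius_div_sq (fun n => ?_) hN
  rw [abs_div, abs_of_nonneg (sq_nonneg (n : ℝ)), div_eq_mul_inv]
  exact mul_le_of_le_one_left (by positivity) (abs_moebius_cast_le_one n)

lemma sum_Ioc_eq_sum_moebius_mul {R : Type*} [Ring R] {f g : ℕ → R}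
    (hfg : ∀ n > 0, ∑ d ∈ n.divisors, g d = f n) (N : ℕ) :
    ∑ n ∈ Ioc 0 N, g n = ∑ m ∈ Ioc 0 N, (moebius m : R) * ∑ d ∈ Ioc 0 (N / m), f d := by
  let F : ArithmeticFunction R := ⟨fun n => if n = 0 then 0 else f n, if_pos rfl⟩
  have hF {n : ℕ} (hn : n ≠ 0) : F n = f n := if_neg hn
  have hinv : ∀ n > 0, ((moebius : ArithmeticFunction R) * F) n = g n := by
    intro n hn
    rw [← sum_eq_iff_sum_mul_moebius_eq.mp hfg n hn, mul_apply]
    refine sum_congr rfl fun x hx => ?_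
    rw [intCoe_apply, hF (Nat.ne_zero_of_mem_divisorsAntidiagonal hx).2]
  calc ∑ n ∈ Ioc 0 N, g n
      = ∑ n ∈ Ioc 0 N, ((moebius : ArithmeticFunction R) * F) n :=
        sum_congr rfl fun n hn => (hinv n (mem_Ioc.mp hn).1).symm
    _ = ∑ m ∈ Ioc 0 N, (moebius m : R) * ∑ d ∈ Ioc 0 (N / m), F d :=
        sum_Ioc_mul_eq_sum_sum _ _ N
    _ = ∑ m ∈ Ioc 0 N, (moebius m : R) * ∑ d ∈ Ioc 0 (N / m), f d :=
        sum_congr rfl fun m _ => congrArg _ <|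
          sum_congr rfl fun d hd => hF (mem_Ioc.mp hd).1.ne'

variable {f g : ℕ → ℝ} {c C : ℝ}

lemma abs_sum_sub_half_mul_sq_le (hf : ∀ n > 0, |f n - c * n| ≤ C) {y : ℝ} (hy : 0 ≤ y) :
    |∑ n ∈ Ioc 0 ⌊y⌋₊, f n - c / 2 * y ^ 2| ≤ (C + |c| / 2) * y := by
  have hC : 0 ≤ C := (abs_nonneg _).trans (hf 1 one_pos)
  have hle : (⌊y⌋₊ : ℝ) ≤ y := Nat.floor_le hy
  have hlt : y < ⌊y⌋₊ + 1 := Nat.lt_floor_add_one y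
  have hgauss (M : ℕ) : ∑ n ∈ Ioc 0 M, (n : ℝ) = M * (M + 1) / 2 := by
    induction M with
    | zero => simp
    | succ M ih =>
      rw [sum_Ioc_succ_top M.zero_le, ih]
      push_cast
      ring
  have hlinear : |∑ n ∈ Ioc 0 ⌊y⌋₊, (f n - c * n)| ≤ C * y := calc
    |∑ n ∈ Ioc 0 ⌊y⌋₊, (f n - c * n)| ≤ ∑ _ ∈ Ioc 0 ⌊y⌋₊, C :=
      (abs_sum_le_sum_abs _ _).trans (sum_le_sum fun n hn => hf n (mem_Ioc.mp hn).1)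
    _ = C * ⌊y⌋₊ := by simp [mul_comm]
    _ ≤ C * y := by gcongr
  have hquad : |(⌊y⌋₊ * (⌊y⌋₊ + 1) - y ^ 2 : ℝ)| ≤ y := by
    rw [abs_le]
    constructor <;> nlinarith [Nat.cast_nonneg (α := ℝ) ⌊y⌋₊]
  have hsplit : ∑ n ∈ Ioc 0 ⌊y⌋₊, f n - c / 2 * y ^ 2 =
      ∑ n ∈ Ioc 0 ⌊y⌋₊, (f n - c * n) + c / 2 * (⌊y⌋₊ * (⌊y⌋₊ + 1) - y ^ 2) := by
    rw [sum_sub_distrib, ← mul_sum, hgauss]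
    ring
  rw [hsplit]
  refine (abs_add_le _ _).trans ?_
  rw [abs_mul, abs_div, abs_two, add_mul]
  gcongr

lemma abs_sum_moebius_mul_sum_sub_le (hf : ∀ n > 0, |f n - c * n| ≤ C) {x : ℝ} (hx : 1 ≤ x) :
    |∑ m ∈ Ioc 0 ⌊x⌋₊, (moebius m : ℝ) * ∑ d ∈ Ioc 0 (⌊x⌋₊ / m), f d
        - c / 2 * x ^ 2 * ∑ m ∈ Ioc 0 ⌊x⌋₊, (moebius m : ℝ) / m ^ 2|
      ≤ (C + |c| / 2) * x * (1 + Real.log x) := by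
  have hC : 0 ≤ C := (abs_nonneg _).trans (hf 1 one_pos)
  have hterm (m : ℕ) : |(moebius m : ℝ) * ∑ d ∈ Ioc 0 (⌊x⌋₊ / m), f d
      - c / 2 * x ^ 2 * ((moebius m : ℝ) / m ^ 2)| ≤ (C + |c| / 2) * x * (m : ℝ)⁻¹ := calc
    _ = |(moebius m : ℝ)| * |∑ d ∈ Ioc 0 ⌊x / m⌋₊, f d - c / 2 * (x / m) ^ 2| := by
      rw [← abs_mul, Nat.floor_div_natCast]
      ring_nf
    _ ≤ 1 * ((C + |c| / 2) * (x / m)) := by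
      gcongr
      · exact abs_moebius_cast_le_one m
      · exact abs_sum_sub_half_mul_sq_le hf (by positivity)
    _ = (C + |c| / 2) * x * (m : ℝ)⁻¹ := by ring
  rw [mul_sum, ← sum_sub_distrib]
  calc _ ≤ ∑ m ∈ Ioc 0 ⌊x⌋₊, (C + |c| / 2) * x * (m : ℝ)⁻¹ :=
        (abs_sum_le_sum_abs _ _).trans (sum_le_sum fun m _ => hterm m)
    _ = (C + |c| / 2) * x * (harmonic ⌊x⌋₊ : ℝ) := by
        rw [← mul_sum, harmonic_eq_sum_Icc]
        push_cast
        rfl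
    _ ≤ (C + |c| / 2) * x * (1 + Real.log x) := by
        gcongr
        exact harmonic_floor_le_one_add_log x hx

lemma abs_mul_sum_moebius_div_sq_sub_le (c : ℝ) {x : ℝ} (hx : 1 ≤ x) :
    |c / 2 * x ^ 2 * ∑ m ∈ Ioc 0 ⌊x⌋₊, (moebius m : ℝ) / m ^ 2
      - 3 * c / Real.pi ^ 2 * x ^ 2| ≤ |c| * x := by
  have hone : (1 : ℝ) ≤ ⌊x⌋₊ := by exact_mod_cast (Nat.one_le_floor_iff x).mpr hx
  have hfloor : x ≤ 2 * ⌊x⌋₊ := by linarith [Nat.lt_floor_add_one x]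
  calc _ = |c / 2 * x ^ 2 *
        (∑ m ∈ Ioc 0 ⌊x⌋₊, (moebius m : ℝ) / m ^ 2 - 6 / Real.pi ^ 2)| := by ring_nf
    _ = |c| / 2 * x ^ 2 *
        |∑ m ∈ Ioc 0 ⌊x⌋₊, (moebius m : ℝ) / m ^ 2 - 6 / Real.pi ^ 2| := by
        rw [abs_mul, abs_mul, abs_div, abs_two, abs_sq]
    _ ≤ |c| / 2 * x ^ 2 * (⌊x⌋₊ : ℝ)⁻¹ := by
        gcongr
        exact abs_sum_moebius_div_sq_sub_le (Nat.floor_pos.mpr hx).ne'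
    _ ≤ |c| / 2 * x ^ 2 * (2 / x) := by
        gcongr
        rw [inv_le_comm₀ (one_pos.trans_le hone) (by positivity), inv_div]
        linarith
    _ = |c| * x := by field_simp

lemma isBigO_self_mul_log : (fun x : ℝ => x) =O[atTop] fun x => x * Real.log x := by
  simpa using (isBigO_refl (fun x : ℝ => x) atTop).mul
    (Real.isLittleO_const_log_atTop (c := 1)).isBigO

lemma isBigO_sum_sub_of_sum_divisors_eq (hfg : ∀ n > 0, ∑ d ∈ n.divisors, g d = f n)
    (hf : ∀ n > 0, |f n - c * n| ≤ C) :
    (fun x : ℝ => ∑ n ∈ Ioc 0 ⌊x⌋₊, g n - 3 * c / Real.pi ^ 2 * x ^ 2)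
      =O[atTop] fun x => x * Real.log x := by
  have hbound : (fun x : ℝ => ∑ n ∈ Ioc 0 ⌊x⌋₊, g n - 3 * c / Real.pi ^ 2 * x ^ 2)
      =O[atTop] fun x => (C + |c| / 2) * x * (1 + Real.log x) + |c| * x := by
    refine IsBigO.of_norm_eventuallyLE ?_
    filter_upwards [eventually_ge_atTop 1] with x hx
    rw [sum_Ioc_eq_sum_moebius_mul hfg]
    exact (abs_sub_le _ _ _).trans (add_le_add (abs_sum_moebius_mul_sum_sub_le hf hx)
      (abs_mul_sum_moebius_div_sq_sub_le c hx))
  refine hbound.trans ?_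
  have hsplit : (fun x : ℝ => (C + |c| / 2) * x * (1 + Real.log x) + |c| * x) =
      fun x => (C + |c| / 2 + |c|) * x + (C + |c| / 2) * (x * Real.log x) := by
    ext x
    ring
  rw [hsplit]
  exact (isBigO_self_mul_log.const_mul_left _).add ((isBigO_refl _ _).const_mul_left _)

end MoebiusSums

lemma abs_log_fib_sub_mul_log_goldenRatio_le {n : ℕ} (hn : 0 < n) :
    |Real.log (Nat.fib n) - Real.log Real.goldenRatio * n| ≤ 2 * Real.log Real.goldenRatio := by
  obtain ⟨n, rfl⟩ := Nat.exists_eq_add_one.mpr hn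
  have hrec := Real.goldenRatio_mul_fib_succ_add_fib n
  have hφ := Real.one_lt_goldenRatio
  have hfib_pos : (0 : ℝ) < Nat.fib (n + 1) := by exact_mod_cast Nat.fib_pos.mpr hn
  have hfib_le : (Nat.fib n : ℝ) ≤ Nat.fib (n + 1) := by exact_mod_cast Nat.fib_le_fib_succ
  have hupper : (Nat.fib (n + 1) : ℝ) ≤ Real.goldenRatio ^ (n + 1) := by
    nlinarith [Nat.cast_nonneg (α := ℝ) (Nat.fib n)]
  have hlower : Real.goldenRatio ^ (n + 1) ≤ Nat.fib (n + 1) * Real.goldenRatio ^ 2 := by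
    rw [Real.goldenRatio_sq]
    linarith
  have hlog_upper := Real.log_le_log hfib_pos hupper
  have hlog_lower := Real.log_le_log (by positivity) hlower
  rw [Real.log_mul hfib_pos.ne' (by positivity), Real.log_pow, Real.log_pow,
    Nat.cast_ofNat] at hlog_lower
  rw [Real.log_pow] at hlog_upper
  rw [abs_le]
  constructor <;> linarith [Real.log_pos hφ]

section LcmFib

variable {N p : ℕ}

/-- The primes whose rank of apparition in the Fibonacci sequence is at most `N`. A prime dividing
some `fib n` with `0 < n ≤ N` is at most `fib N`, so the bound `fib N` discards nothing. -/
noncomputable def primesOfRankLE (N : ℕ) : Finset ℕ :=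
  (Icc 1 (Nat.fib N)).filter (fun p => p.Prime ∧ fibAlpha p ≤ N)

lemma fibAlpha_eq_rankOfApparition : fibAlpha = rankOfApparition Nat.fib := rfl

lemma fib_ne_zero {n : ℕ} (hn : 0 < n) : Nat.fib n ≠ 0 := (Nat.fib_pos.mpr hn).ne'

lemma pow_fibE_dvd_lcm_fib (h : fibAlpha p ≤ N) : p ^ fibE p ∣ (Ioc 0 N).lcm Nat.fib := by
  obtain hzero | hpos := (fibAlpha p).eq_zero_or_pos
  · simp [fibE, hzero]
  · exact (Nat.ordProj_dvd _ p).trans (dvd_lcm (mem_Ioc.mpr ⟨hpos, h⟩))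

lemma prod_pow_fibE_dvd_lcm_fib (N : ℕ) :
    ∏ p ∈ primesOfRankLE N, p ^ fibE p ∣ (Ioc 0 N).lcm Nat.fib := by
  refine prod_dvd_of_isRelPrime (fun p hp q hq hpq => ?_) fun p hp => ?_
  · exact Nat.coprime_iff_isRelPrime.mp
      (Nat.coprime_pow_primes _ _ (mem_filter.mp hp).2.1 (mem_filter.mp hq).2.1 hpq)
  · exact pow_fibE_dvd_lcm_fib (mem_filter.mp hp).2.2

lemma factorization_fib_le {n : ℕ} (hp : p.Prime) (hn : 0 < n) (hnN : n ≤ N)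
    (h : p ∣ Nat.fib n) :
    (Nat.fib n).factorization p ≤ fibE p + 2 * N.factorial.factorization p := by
  have hα := rankOfApparition_pos hn h
  obtain ⟨k, hk⟩ := rankOfApparition_dvd Nat.isStrongDvdSequence_fib hn h
  rw [← fibAlpha_eq_rankOfApparition] at hk
  have hk_pos : 0 < k := Nat.pos_of_mul_pos_left (hk ▸ hn)
  have hkN : k ∣ N.factorial :=
    Nat.dvd_factorial hk_pos ((Nat.le_of_dvd hn ⟨_, hk.trans (mul_comm _ _)⟩).trans hnN)
  calc (Nat.fib n).factorization p ≤ fibE p + 2 * k.factorization p :=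
        hk ▸ factorization_fib_mul_le hp (dvd_apply_rankOfApparition hα) k
    _ ≤ fibE p + 2 * N.factorial.factorization p := by
        gcongr
        exact (Nat.factorization_le_iff_dvd hk_pos.ne' N.factorial_ne_zero).mpr hkN p

lemma mem_primesOfRankLE_of_dvd_fib {n : ℕ} (hp : p.Prime) (hn : 0 < n) (hnN : n ≤ N)
    (h : p ∣ Nat.fib n) : p ∈ primesOfRankLE N :=
  mem_filter.mpr ⟨mem_Icc.mpr ⟨hp.one_le, (Nat.le_of_dvd (Nat.fib_pos.mpr hn) h).trans
    (Nat.fib_mono hnN)⟩, hp, (rankOfApparition_le hn h).trans hnN⟩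

lemma lcm_fib_dvd_prod_pow_fibE_mul (N : ℕ) :
    (Ioc 0 N).lcm Nat.fib ∣ (∏ p ∈ primesOfRankLE N, p ^ fibE p) * N.factorial ^ 2 := by
  have hprod : ∏ p ∈ primesOfRankLE N, p ^ fibE p ≠ 0 :=
    prod_ne_zero_iff.mpr fun p hp => pow_ne_zero _ (mem_filter.mp hp).2.1.ne_zero
  have hfact : N.factorial ^ 2 ≠ 0 := pow_ne_zero _ N.factorial_ne_zero
  refine Finset.lcm_dvd fun n hn => ?_
  obtain ⟨hn, hnN⟩ := mem_Ioc.mp hn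
  refine (Nat.factorization_prime_le_iff_dvd (fib_ne_zero hn) (mul_ne_zero hprod hfact)).mp
    fun p hp => ?_
  by_cases hdvd : p ∣ Nat.fib n
  · have hE : fibE p ≤ (∏ p ∈ primesOfRankLE N, p ^ fibE p).factorization p :=
      (hp.pow_dvd_iff_le_factorization hprod).mp
        (dvd_prod_of_mem _ (mem_primesOfRankLE_of_dvd_fib hp hn hnN hdvd))
    rw [Nat.factorization_mul hprod hfact, Nat.factorization_pow, Finsupp.add_apply,
      Finsupp.smul_apply, smul_eq_mul]
    exact (factorization_fib_le hp hn hnN hdvd).trans (by gcongr)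
  · simp [Nat.factorization_eq_zero_of_not_dvd hdvd]

lemma log_prod_pow_fibE (N : ℕ) :
    Real.log (∏ p ∈ primesOfRankLE N, p ^ fibE p : ℕ) =
      ∑ p ∈ primesOfRankLE N, (fibE p : ℝ) * Real.log p := by
  push_cast
  rw [Real.log_prod fun p hp =>
    pow_ne_zero _ (Nat.cast_ne_zero.mpr (mem_filter.mp hp).2.1.ne_zero)]
  simp only [Real.log_pow]

lemma abs_sum_fibE_mul_log_sub_log_lcm_fib_le (N : ℕ) :
    |∑ p ∈ primesOfRankLE N, (fibE p : ℝ) * Real.log p - Real.log ((Ioc 0 N).lcm Nat.fib : ℕ)|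
      ≤ 2 * (N * Real.log N) := by
  rw [← log_prod_pow_fibE]
  set P := ∏ p ∈ primesOfRankLE N, p ^ fibE p
  have hlcm : 0 < (Ioc 0 N).lcm Nat.fib := Nat.pos_of_ne_zero <|
    Finset.lcm_ne_zero_iff.mpr fun n hn => fib_ne_zero (mem_Ioc.mp hn).1
  have hP_pos : 0 < P := Nat.pos_of_dvd_of_pos (prod_pow_fibE_dvd_lcm_fib N) hlcm
  have hlower : Real.log P ≤ Real.log ((Ioc 0 N).lcm Nat.fib : ℕ) :=
    Real.log_le_log (by positivity)
      (by exact_mod_cast Nat.le_of_dvd hlcm (prod_pow_fibE_dvd_lcm_fib N))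
  have hle : (Ioc 0 N).lcm Nat.fib ≤ P * (N ^ N) ^ 2 :=
    (Nat.le_of_dvd (by positivity) (lcm_fib_dvd_prod_pow_fibE_mul N)).trans
      (by gcongr; exact Nat.factorial_le_pow N)
  have hNN : (N ^ N : ℝ) ≠ 0 := by exact_mod_cast (Nat.pow_self_pos (n := N)).ne'
  have hupper : Real.log ((Ioc 0 N).lcm Nat.fib : ℕ) ≤ Real.log P + 2 * (N * Real.log N) := calc
    _ ≤ Real.log (P * (N ^ N) ^ 2) :=
      Real.log_le_log (by exact_mod_cast hlcm) (by exact_mod_cast hle)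
    _ = Real.log P + 2 * (N * Real.log N) := by
      rw [Real.log_mul (by positivity) (pow_ne_zero _ hNN), Real.log_pow, Real.log_pow]
      push_cast
      rfl
  rw [abs_le]
  constructor <;> linarith [Real.log_natCast_nonneg N]

lemma isBigO_sum_fibE_mul_log_sub_log_lcm_fib :
    (fun x : ℝ => ∑ p ∈ primesOfRankLE ⌊x⌋₊, (fibE p : ℝ) * Real.log p
        - Real.log ((Ioc 0 ⌊x⌋₊).lcm Nat.fib : ℕ)) =O[atTop] fun x => x * Real.log x := by
  refine IsBigO.of_bound 2 ?_
  filter_upwards [eventually_ge_atTop 1] with x hx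
  have hfloor : (0 : ℝ) < ⌊x⌋₊ := by exact_mod_cast Nat.floor_pos.mpr hx
  have hle : (⌊x⌋₊ : ℝ) ≤ x := Nat.floor_le (by linarith)
  refine (abs_sum_fibE_mul_log_sub_log_lcm_fib_le ⌊x⌋₊).trans ?_
  rw [Real.norm_of_nonneg (mul_nonneg (by linarith) (Real.log_nonneg hx))]
  gcongr

lemma isBigO_log_lcm_fib_sub :
    (fun x : ℝ => Real.log ((Ioc 0 ⌊x⌋₊).lcm Nat.fib : ℕ)
        - 3 * Real.log Real.goldenRatio / Real.pi ^ 2 * x ^ 2)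
      =O[atTop] fun x => x * Real.log x := by
  simp_rw [← sum_Ioc_logPrimitivePart fun _ => fib_ne_zero]
  exact isBigO_sum_sub_of_sum_divisors_eq
    (fun _ => sum_divisors_logPrimitivePart Nat.isStrongDvdSequence_fib fun _ => fib_ne_zero)
    fun _ => abs_log_fib_sub_mul_log_goldenRatio_le

end LcmFib

theorem primitive_prime_weighted_sum_asymp :
    (fun x : ℝ =>
        (∑ p ∈ (Icc 1 (Nat.fib ⌊x⌋₊)).filter (fun p => p.Prime ∧ fibAlpha p ≤ ⌊x⌋₊),
            (fibE p : ℝ) * Real.log p)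
          - 3 * Real.log ((1 + Real.sqrt 5) / 2) / Real.pi ^ 2 * x ^ 2)
      =O[atTop] fun x : ℝ => x * Real.log x := by
  refine (isBigO_sum_fibE_mul_log_sub_log_lcm_fib.add isBigO_log_lcm_fib_sub).congr_left fun x => ?_
  exact sub_add_sub_cancel _ _ _
end

section
/- Let π_α(x) := #{p prime : α(p) ≤ x}, the number of primes dividing some Fibonacci number a_n with n ≤ x. Then limsup_{x→∞} (log x)/x² · π_α(x) ≤ (3 log r)/(2π²), where r = (1+√5)/2. -/
open Finset Filter

/-- The number of primes dividing some Fibonacci number `a_n` with `n ≤ x`. -/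
noncomputable def piAlpha (x : ℝ) : ℕ :=
  ((Icc 1 (Nat.fib ⌊x⌋₊)).filter (fun p => p.Prime ∧ fibAlpha p ≤ ⌊x⌋₊)).card

/-!
Collect the prime powers `q` by their rank of apparition: `n ↦ ∑_{α(q) = n} Λ(q)` is the Möbius
inverse of `n ↦ log a_n`, because `q ∣ a_m ↔ α(q) ∣ m`. Since `log a_n ∼ n log r`, its summatory
function, which is `log lcm(a_1, …, a_N)`, is asymptotic to
`(log r / 2) N² ∑ μ(e) / e² = (3 log r / π²) N²`. It bounds `∑_{α(p) ≤ N} log p`, and all but at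
most `x² / log² x` of the primes counted by `π_α(x)` contribute at least `(2 - o(1)) log x` to
that sum.
-/

open Topology ArithmeticFunction
open scoped ArithmeticFunction.Moebius ArithmeticFunction.zeta goldenRatio

section Asymptotics

/-- The Stolz–Cesàro theorem. -/
theorem tendsto_div_of_tendsto_sub_div_sub {a b : ℕ → ℝ} {L : ℝ} (hmono : StrictMono b)
    (hb : Tendsto b atTop atTop)
    (h : Tendsto (fun n => (a (n + 1) - a n) / (b (n + 1) - b n)) atTop (𝓝 L)) :
    Tendsto (fun n => a n / b n) atTop (𝓝 L) := by
  have step_pos : ∀ n, 0 < b (n + 1) - b n := fun n => sub_pos.2 (hmono n.lt_succ_self)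
  have step_isLittleO : (fun n => a (n + 1) - a n - L * (b (n + 1) - b n))
      =o[atTop] fun n => b (n + 1) - b n := by
    refine (Asymptotics.isLittleO_iff_tendsto fun n hn => absurd hn (step_pos n).ne').2 ?_
    refine (tendsto_sub_nhds_zero_iff.2 h).congr fun n => ?_
    rw [sub_div _ (L * _), mul_div_cancel_right₀ _ (step_pos n).ne']
  have sum_step : ∀ n, ∑ i ∈ range n, (a (i + 1) - a i - L * (b (i + 1) - b i)) =
      a n - L * b n - (a 0 - L * b 0) := fun n => by
    rw [sum_sub_distrib, ← mul_sum, sum_range_sub, sum_range_sub]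
    ring
  have const_isLittleO : ∀ c : ℝ, (fun _ : ℕ => c) =o[atTop] b := fun c =>
    Asymptotics.isLittleO_const_left.2 (Or.inr (tendsto_norm_atTop_atTop.comp hb))
  have sub_isLittleO : (fun n => a n - L * b n) =o[atTop] b := by
    have hsum := step_isLittleO.sum_range (fun n => (step_pos n).le)
      (by simpa only [sum_range_sub] using! tendsto_atTop_add_const_right _ (-b 0) hb)
    simp only [sum_step, sum_range_sub] at hsum
    have hrange := (Asymptotics.isBigO_refl b atTop).sub (const_isLittleO (b 0)).isBigO
    simpa using (hsum.trans_isBigO hrange).add (const_isLittleO (a 0 - L * b 0))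
  refine tendsto_sub_nhds_zero_iff.1 (sub_isLittleO.tendsto_div_nhds_zero.congr' ?_)
  filter_upwards [hb.eventually_gt_atTop 0] with n hn
  rw [sub_div, mul_div_cancel_right₀ _ hn.ne']

theorem tendsto_sum_Ioc_div_sq {u : ℕ → ℝ} {L : ℝ} (hu : Tendsto (fun n => u n / n) atTop (𝓝 L)) :
    Tendsto (fun N : ℕ => (∑ n ∈ Ioc 0 N, u n) / (N : ℝ) ^ 2) atTop (𝓝 (L / 2)) := by
  refine tendsto_div_of_tendsto_sub_div_sub ?_ ?_ ?_
  · exact fun m n hmn => pow_lt_pow_left₀ (Nat.cast_lt.2 hmn) m.cast_nonneg two_ne_zero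
  · exact (tendsto_pow_atTop two_ne_zero).comp tendsto_natCast_atTop_atTop
  have hinv : Tendsto (fun n : ℕ => 2 - 1 / ((n + 1 : ℕ) : ℝ)) atTop (𝓝 (2 - 0)) :=
    tendsto_const_nhds.sub (tendsto_one_div_atTop_nhds_zero_nat.comp (tendsto_add_atTop_nat 1))
  have hquot := (hu.comp (tendsto_add_atTop_nat 1)).div hinv (by norm_num)
  rw [sub_zero] at hquot
  refine hquot.congr fun n => ?_
  rw [sum_Ioc_succ_top n.zero_le, add_sub_cancel_left]
  simp only [Function.comp, Pi.div_apply]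
  push_cast
  have : (2 - 1 / ((n : ℝ) + 1)) * (n + 1) = (n + 1) ^ 2 - n ^ 2 := by field_simp; ring
  rw [div_div, mul_comm, this]

theorem tendsto_natFloor_div_pow {S : ℕ → ℝ} {k : ℕ} {c : ℝ}
    (hS : Tendsto (fun N : ℕ => S N / (N : ℝ) ^ k) atTop (𝓝 c)) :
    Tendsto (fun x : ℝ => S ⌊x⌋₊ / x ^ k) atTop (𝓝 c) := by
  have hfloor := (hS.comp tendsto_nat_floor_atTop).mul
    ((tendsto_nat_floor_div_atTop (R := ℝ)).pow k)
  rw [one_pow, mul_one] at hfloor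
  refine hfloor.congr' ?_
  filter_upwards [eventually_ge_atTop 1] with x hx
  have : (0 : ℝ) < ⌊x⌋₊ := Nat.cast_pos.2 (Nat.floor_pos.2 hx)
  simp only [Function.comp, div_pow]
  field_simp

theorem exists_abs_le_mul_pow {S : ℕ → ℝ} {k : ℕ} {c : ℝ} (hS0 : S 0 = 0)
    (hS : Tendsto (fun N : ℕ => S N / (N : ℝ) ^ k) atTop (𝓝 c)) :
    ∃ C, 0 ≤ C ∧ ∀ N, |S N| ≤ C * (N : ℝ) ^ k := by
  obtain ⟨C, hC⟩ := Asymptotics.isBigO_one_nat_atTop_iff.1 (hS.isBigO_one ℝ)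
  have hC0 : 0 ≤ C := (norm_nonneg _).trans (hC 0)
  refine ⟨C, hC0, fun N => ?_⟩
  rcases N.eq_zero_or_pos with rfl | hN
  · rw [hS0, abs_zero]
    positivity
  · have := hC N
    rwa [Real.norm_eq_abs, abs_div, abs_of_nonneg (by positivity : (0 : ℝ) ≤ (N : ℝ) ^ k),
      div_le_iff₀ (by positivity)] at this

end Asymptotics

section DirichletConvolution

theorem tendsto_sum_Ioc_mul_div_pow {f g : ArithmeticFunction ℝ} {k : ℕ} {c : ℝ}
    (hf : Summable fun e : ℕ => |f e| / (e : ℝ) ^ k)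
    (hg : Tendsto (fun N : ℕ => (∑ n ∈ Ioc 0 N, g n) / (N : ℝ) ^ k) atTop (𝓝 c)) :
    Tendsto (fun N : ℕ => (∑ n ∈ Ioc 0 N, (f * g) n) / (N : ℝ) ^ k) atTop
      (𝓝 ((∑' e : ℕ, f e / (e : ℝ) ^ k) * c)) := by
  set S : ℕ → ℝ := fun N => ∑ n ∈ Ioc 0 N, g n with hS
  obtain ⟨C, hC0, hC⟩ := exists_abs_le_mul_pow (S := S) (by simp [hS]) hg
  have term_tendsto : ∀ e : ℕ, Tendsto (fun N : ℕ => f e * S (N / e) / (N : ℝ) ^ k) atTop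
      (𝓝 (f e / (e : ℝ) ^ k * c)) := fun e => by
    rcases e.eq_zero_or_pos with rfl | he
    · simp
    have hquot : Tendsto (fun N : ℕ => (N : ℝ) / e) atTop atTop :=
      tendsto_natCast_atTop_atTop.atTop_div_const (by positivity)
    refine (((tendsto_natFloor_div_pow hg).comp hquot).const_mul _).congr fun N => ?_
    simp only [Function.comp, Nat.floor_div_eq_div, div_pow, hS]
    field_simp
  have term_le : ∀ N e : ℕ, ‖f e * S (N / e) / (N : ℝ) ^ k‖ ≤ C * (|f e| / (e : ℝ) ^ k) := by
    intro N e
    have hdiv : C * ((N / e : ℕ) : ℝ) ^ k ≤ C * ((N : ℝ) / e) ^ k := by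
      gcongr
      exact Nat.cast_div_le
    rw [norm_div, norm_mul, Real.norm_eq_abs, Real.norm_eq_abs, norm_pow, Real.norm_natCast]
    refine div_le_of_le_mul₀ (by positivity) (by positivity) ?_
    calc |f e| * |S (N / e)| ≤ |f e| * (C * ((N : ℝ) / e) ^ k) := by
          gcongr
          exact (hC _).trans hdiv
      _ = C * (|f e| / (e : ℝ) ^ k) * (N : ℝ) ^ k := by rw [div_pow]; ring
  rw [← tsum_mul_right]
  refine (tendsto_tsum_of_dominated_convergence (hf.mul_left C) term_tendsto
    (Eventually.of_forall term_le)).congr fun N => ?_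
  rw [sum_Ioc_mul_eq_sum_sum, sum_div, tsum_eq_sum]
  intro e he
  rcases e.eq_zero_or_pos with rfl | he0
  · simp
  · have : N / e = 0 := Nat.div_eq_of_lt (by simpa [he0] using he)
    simp [hS, this]

theorem ofReal_tsum_moebius_div_pow {k : ℕ} (hk : 1 < k) :
    ((∑' e : ℕ, (μ e : ℝ) / (e : ℝ) ^ k : ℝ) : ℂ) = (riemannZeta k)⁻¹ := by
  have hre : 1 < (k : ℂ).re := by simpa using hk
  have hL : LSeries (fun n => (μ n : ℂ)) k = ((∑' e : ℕ, (μ e : ℝ) / (e : ℝ) ^ k : ℝ) : ℂ) := by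
    rw [LSeries, Complex.ofReal_tsum]
    refine tsum_congr fun n => ?_
    rcases eq_or_ne n 0 with rfl | hn
    · simp
    · rw [LSeries.term_of_ne_zero hn, Complex.cpow_natCast]
      push_cast
      rfl
  rw [← hL, ← LSeries_zeta_eq_riemannZeta hre]
  exact eq_inv_of_mul_eq_one_right (LSeries_zeta_mul_Lseries_moebius hre)

theorem tsum_moebius_div_sq : ∑' e : ℕ, (μ e : ℝ) / (e : ℝ) ^ 2 = 6 / Real.pi ^ 2 := by
  have h := ofReal_tsum_moebius_div_pow one_lt_two
  rw [Nat.cast_two, riemannZeta_two, inv_div] at h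
  exact_mod_cast h

theorem summable_abs_moebius_div_pow {k : ℕ} (hk : 1 < k) :
    Summable fun e : ℕ => |(μ e : ℝ)| / (e : ℝ) ^ k := by
  refine (Real.summable_one_div_nat_pow.2 hk).of_nonneg_of_le (fun e => by positivity) fun e => ?_
  gcongr
  exact_mod_cast abs_moebius_le_one

end DirichletConvolution

section CountingByLogarithms

theorem card_le_add_sum_log_div_log {A : Finset ℕ} (hA : 0 ∉ A) {T : ℝ} (hT : 1 < T) :
    (#A : ℝ) ≤ T + (∑ p ∈ A, Real.log p) / Real.log T := by
  have log_le : ∀ p ∈ A \ Ioc 0 ⌊T⌋₊, Real.log T ≤ Real.log p := fun p hp => by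
    obtain ⟨hpA, hpT⟩ := mem_sdiff.1 hp
    have hp0 : 0 < p := Nat.pos_of_ne_zero (ne_of_mem_of_not_mem hpA hA)
    have hTp : T < p := Nat.lt_of_floor_lt (not_le.1 fun h => hpT (mem_Ioc.2 ⟨hp0, h⟩))
    exact Real.log_le_log (by linarith) hTp.le
  have card_large : (#(A \ Ioc 0 ⌊T⌋₊) : ℝ) ≤ (∑ p ∈ A, Real.log p) / Real.log T := by
    rw [le_div_iff₀ (Real.log_pos hT), ← nsmul_eq_mul]
    exact (card_nsmul_le_sum _ _ _ log_le).trans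
      (sum_le_sum_of_subset_of_nonneg sdiff_subset fun _ _ _ => Real.log_natCast_nonneg _)
  calc (#A : ℝ) ≤ #(A \ Ioc 0 ⌊T⌋₊) + #(Ioc 0 ⌊T⌋₊) := by
        exact_mod_cast card_le_card_sdiff_add_card
    _ ≤ (∑ p ∈ A, Real.log p) / Real.log T + T := by
        gcongr
        simpa using Nat.floor_le (by linarith)
    _ = T + (∑ p ∈ A, Real.log p) / Real.log T := add_comm _ _

theorem tendsto_log_pow_div_log_sq_div_log (k : ℕ) :
    Tendsto (fun x : ℝ => Real.log (x ^ k / Real.log x ^ 2) / Real.log x) atTop (𝓝 k) := by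
  have hloglog : Tendsto (fun x : ℝ => Real.log (Real.log x) / Real.log x) atTop (𝓝 0) :=
    Real.isLittleO_log_id_atTop.tendsto_div_nhds_zero.comp Real.tendsto_log_atTop
  have hlim := (tendsto_const_nhds (x := (k : ℝ))).sub (hloglog.const_mul 2)
  rw [mul_zero, sub_zero] at hlim
  refine hlim.congr' ?_
  filter_upwards [eventually_gt_atTop 1] with x hx
  have hlog := Real.log_pos hx
  rw [Real.log_div (by positivity) (by positivity), Real.log_pow, Real.log_pow]
  push_cast
  field_simp

theorem limsup_log_div_pow_mul_card_le {A : ℝ → Finset ℕ} {G : ℝ → ℝ} {k : ℕ} {c : ℝ} (hk : k ≠ 0)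
    (hA : ∀ x, 0 ∉ A x) (hAG : ∀ x, ∑ p ∈ A x, Real.log p ≤ G x)
    (hG : Tendsto (fun x => G x / x ^ k) atTop (𝓝 c)) :
    limsup (fun x : ℝ => Real.log x / x ^ k * (#(A x) : ℝ)) atTop ≤ c / k := by
  have hk' : (0 : ℝ) < k := by positivity
  have hlogT := tendsto_log_pow_div_log_sq_div_log k
  have hmajorant := (tendsto_inv_atTop_zero.comp Real.tendsto_log_atTop).add
    (hG.div hlogT hk'.ne')
  rw [zero_add] at hmajorant
  rw [← hmajorant.limsup_eq]
  refine limsup_le_limsup ?_ ?_ hmajorant.isBoundedUnder_le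
  · filter_upwards [hlogT.eventually_const_lt hk', eventually_gt_atTop 1] with x hratio hx
    have hlog : 0 < Real.log x := Real.log_pos hx
    have hlogT_pos := (div_pos_iff_of_pos_right hlog).1 hratio
    have hT : 1 < x ^ k / Real.log x ^ 2 := (Real.log_pos_iff (by positivity)).1 hlogT_pos
    calc Real.log x / x ^ k * (#(A x) : ℝ)
        ≤ Real.log x / x ^ k *
            (x ^ k / Real.log x ^ 2 + G x / Real.log (x ^ k / Real.log x ^ 2)) := by
          gcongr
          refine (card_le_add_sum_log_div_log (hA x) hT).trans ?_
          gcongr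
          exact hAG x
      _ = (Real.log x)⁻¹ + G x / x ^ k / (Real.log (x ^ k / Real.log x ^ 2) / Real.log x) := by
          generalize Real.log (x ^ k / Real.log x ^ 2) = D at hlogT_pos
          field_simp
  · refine IsBoundedUnder.isCoboundedUnder_le ⟨0, eventually_map.2 ?_⟩
    filter_upwards [eventually_gt_atTop 1] with x hx
    have := Real.log_pos hx
    positivity

end CountingByLogarithms

section RankOfApparition

theorem exists_pos_dvd_fib {n : ℕ} (hn : 0 < n) : ∃ m, 0 < m ∧ n ∣ Nat.fib m := by
  have : NeZero n := ⟨hn.ne'⟩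
  let step : ZMod n × ZMod n → ZMod n × ZMod n := fun p => (p.2, p.1 + p.2)
  have step_injective : Function.Injective step := fun p q h => by
    simp only [step, Prod.mk.injEq] at h
    exact Prod.ext (by simpa [h.1] using h.2) h.1
  have iterate_step : ∀ m, step^[m] (0, 1) = (↑(Nat.fib m), ↑(Nat.fib (m + 1))) := fun m => by
    induction m with
    | zero => simp
    | succ m ih => rw [Function.iterate_succ_apply', ih, Nat.fib_add_two, Nat.cast_add]
  obtain ⟨m, hm, hperiod⟩ := step_injective.mem_periodicPts (0, 1)
  refine ⟨m, hm, (ZMod.natCast_eq_zero_iff _ _).1 ?_⟩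
  simpa [iterate_step] using congrArg Prod.fst hperiod.eq

variable {n : ℕ}

theorem fibAlpha_pos : 0 < fibAlpha n ↔ 0 < n := by
  refine ⟨fun h => ?_, fun hn => (Nat.sInf_mem (exists_pos_dvd_fib hn)).1⟩
  obtain ⟨m, hm, hdvd⟩ := Nat.nonempty_of_pos_sInf h
  exact Nat.pos_of_dvd_of_pos hdvd (Nat.fib_pos.2 hm)

theorem dvd_fib_fibAlpha (hn : 0 < n) : n ∣ Nat.fib (fibAlpha n) :=
  (Nat.sInf_mem (exists_pos_dvd_fib hn)).2

theorem fibAlpha_le {m : ℕ} (hm : 0 < m) (h : n ∣ Nat.fib m) : fibAlpha n ≤ m :=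
  Nat.sInf_le ⟨hm, h⟩

theorem fibAlpha_dvd_iff (hn : 0 < n) {m : ℕ} : fibAlpha n ∣ m ↔ n ∣ Nat.fib m := by
  refine ⟨fun h => (dvd_fib_fibAlpha hn).trans (Nat.fib_dvd _ _ h), fun h => ?_⟩
  have hgcd : n ∣ Nat.fib ((fibAlpha n).gcd m) := by
    rw [Nat.fib_gcd]
    exact Nat.dvd_gcd (dvd_fib_fibAlpha hn) h
  have hle := fibAlpha_le (Nat.gcd_pos_of_pos_left m (fibAlpha_pos.2 hn)) hgcd
  exact Nat.gcd_eq_left_iff_dvd.1 (le_antisymm (Nat.gcd_le_left m (fibAlpha_pos.2 hn)) hle)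

end RankOfApparition

section Fibonacci

/-- The arithmetic function `n ↦ log a_n`; at `n = 0` it takes the value `Real.log 0 = 0`. -/
noncomputable def logFib : ArithmeticFunction ℝ :=
  ⟨fun n => Real.log (Nat.fib n), by simp⟩

/-- The von Mangoldt mass carried by the `q` with rank of apparition `α(q) = n`. It is the logarithm
of the cyclotomic factor `Φ_n` of the Fibonacci sequence, characterised by `a_m = ∏_{d ∣ m} Φ_d`. -/
noncomputable def logFibCyclotomic : ArithmeticFunction ℝ :=
  ⟨fun n => ∑ q ∈ (Nat.fib n).divisors with fibAlpha q = n, Λ q, by simp⟩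

theorem filter_divisors_fib_fibAlpha_eq {d m : ℕ} (hdm : d ∣ m) (hm : 0 < m) :
    {q ∈ (Nat.fib m).divisors | fibAlpha q = d} = {q ∈ (Nat.fib d).divisors | fibAlpha q = d} := by
  have hd : 0 < d := Nat.pos_of_dvd_of_pos hdm hm
  ext q
  simp only [mem_filter, and_congr_left_iff]
  rintro rfl
  have hq : 0 < q := fibAlpha_pos.1 hd
  simp [← fibAlpha_dvd_iff hq, hdm, hm.ne', hd.ne']

theorem logFibCyclotomic_mul_zeta : logFibCyclotomic * (ζ : ArithmeticFunction ℝ) = logFib := by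
  ext m
  rcases m.eq_zero_or_pos with rfl | hm
  · simp
  have maps_to : ∀ q ∈ (Nat.fib m).divisors, fibAlpha q ∈ m.divisors := fun q hq =>
    Nat.mem_divisors.2 ⟨(fibAlpha_dvd_iff (Nat.pos_of_mem_divisors hq)).2
      (Nat.dvd_of_mem_divisors hq), hm.ne'⟩
  calc (logFibCyclotomic * (ζ : ArithmeticFunction ℝ)) m
      = ∑ d ∈ m.divisors, ∑ q ∈ (Nat.fib d).divisors with fibAlpha q = d, Λ q :=
        coe_mul_zeta_apply
    _ = ∑ d ∈ m.divisors, ∑ q ∈ (Nat.fib m).divisors with fibAlpha q = d, Λ q :=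
        sum_congr rfl fun d hd => by
          rw [filter_divisors_fib_fibAlpha_eq (Nat.dvd_of_mem_divisors hd) hm]
    _ = Real.log (Nat.fib m) := by rw [sum_fiberwise_of_maps_to maps_to, vonMangoldt_sum]

theorem logFibCyclotomic_eq_moebius_mul_logFib :
    logFibCyclotomic = (μ : ArithmeticFunction ℝ) * logFib := by
  rw [← logFibCyclotomic_mul_zeta, mul_left_comm, coe_moebius_mul_coe_zeta, mul_one]

theorem tendsto_logFib_div : Tendsto (fun n : ℕ => logFib n / n) atTop (𝓝 (Real.log φ)) := by
  refine tendsto_div_of_tendsto_sub_div_sub Nat.strictMono_cast tendsto_natCast_atTop_atTop ?_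
  refine (tendsto_fib_succ_div_fib_atTop.log Real.goldenRatio_ne_zero).congr' ?_
  filter_upwards [eventually_gt_atTop 0] with n hn
  have hfib : ∀ {j : ℕ}, 0 < j → (Nat.fib j : ℝ) ≠ 0 := fun hj =>
    Nat.cast_ne_zero.2 (Nat.fib_pos.2 hj).ne'
  rw [Real.log_div (hfib n.succ_pos) (hfib hn)]
  simp [logFib]

theorem tendsto_sum_logFibCyclotomic_div_sq :
    Tendsto (fun N : ℕ => (∑ n ∈ Ioc 0 N, logFibCyclotomic n) / (N : ℝ) ^ 2) atTop
      (𝓝 (3 * Real.log φ / Real.pi ^ 2)) := by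
  rw [logFibCyclotomic_eq_moebius_mul_logFib]
  have h := tendsto_sum_Ioc_mul_div_pow (f := (μ : ArithmeticFunction ℝ))
    (summable_abs_moebius_div_pow one_lt_two) (tendsto_sum_Ioc_div_sq tendsto_logFib_div)
  simp only [intCoe_apply, tsum_moebius_div_sq] at h
  convert! h using 2
  ring

/-- The primes with rank of apparition at most `N`, as in the definition of `piAlpha`. -/
noncomputable def primesFibAlphaLE (N : ℕ) : Finset ℕ :=
  (Icc 1 (Nat.fib N)).filter fun p => p.Prime ∧ fibAlpha p ≤ N

theorem mem_primesFibAlphaLE {N p : ℕ} : p ∈ primesFibAlphaLE N ↔ p.Prime ∧ fibAlpha p ≤ N := by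
  refine ⟨fun hp => (mem_filter.1 hp).2, fun hp => mem_filter.2 ⟨mem_Icc.2 ⟨hp.1.one_le, ?_⟩, hp⟩⟩
  exact (Nat.le_of_dvd (Nat.fib_pos.2 (fibAlpha_pos.2 hp.1.pos)) (dvd_fib_fibAlpha hp.1.pos)).trans
    (Nat.fib_mono hp.2)

theorem sum_log_primesFibAlphaLE_le (N : ℕ) :
    ∑ p ∈ primesFibAlphaLE N, Real.log p ≤ ∑ n ∈ Ioc 0 N, logFibCyclotomic n := by
  have prime : ∀ p ∈ primesFibAlphaLE N, p.Prime := fun p hp => (mem_primesFibAlphaLE.1 hp).1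
  have maps_to : ∀ p ∈ primesFibAlphaLE N, fibAlpha p ∈ Ioc 0 N := fun p hp =>
    mem_Ioc.2 ⟨fibAlpha_pos.2 (prime p hp).pos, (mem_primesFibAlphaLE.1 hp).2⟩
  have fiber_subset : ∀ n ∈ Ioc 0 N, {p ∈ primesFibAlphaLE N | fibAlpha p = n} ⊆
      {q ∈ (Nat.fib n).divisors | fibAlpha q = n} := by
    rintro n hn p hp
    obtain ⟨hpN, rfl⟩ := mem_filter.1 hp
    simp [dvd_fib_fibAlpha (prime p hpN).pos, (mem_Ioc.1 hn).1.ne']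
  calc ∑ p ∈ primesFibAlphaLE N, Real.log p = ∑ p ∈ primesFibAlphaLE N, Λ p :=
        sum_congr rfl fun p hp => (vonMangoldt_apply_prime (prime p hp)).symm
    _ = ∑ n ∈ Ioc 0 N, ∑ p ∈ primesFibAlphaLE N with fibAlpha p = n, Λ p :=
        (sum_fiberwise_of_maps_to maps_to _).symm
    _ ≤ ∑ n ∈ Ioc 0 N, logFibCyclotomic n := sum_le_sum fun n hn =>
        sum_le_sum_of_subset_of_nonneg (fiber_subset n hn) fun _ _ _ => vonMangoldt_nonneg

end Fibonacci

theorem piAlpha_limsup_le :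
    limsup (fun x : ℝ => Real.log x / x ^ 2 * (piAlpha x : ℝ)) atTop
      ≤ 3 * Real.log ((1 + Real.sqrt 5) / 2) / (2 * Real.pi ^ 2) := by
  have zero_notMem : ∀ x : ℝ, 0 ∉ primesFibAlphaLE ⌊x⌋₊ := fun x h =>
    Nat.not_prime_zero (mem_primesFibAlphaLE.1 h).1
  calc limsup (fun x : ℝ => Real.log x / x ^ 2 * (piAlpha x : ℝ)) atTop
      ≤ 3 * Real.log φ / Real.pi ^ 2 / (2 : ℕ) :=
        limsup_log_div_pow_mul_card_le two_ne_zero zero_notMem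
          (fun x => sum_log_primesFibAlphaLE_le ⌊x⌋₊)
          (tendsto_natFloor_div_pow tendsto_sum_logFibCyclotomic_div_sq)
    _ = 3 * Real.log ((1 + Real.sqrt 5) / 2) / (2 * Real.pi ^ 2) := by
        rw [div_div, mul_comm (Real.pi ^ 2), Nat.cast_two]
end

section
/- For complex s with Re(s) > 1, ∑_{n=1}^∞ λ_α(n)/n^s = (1 + 2^{-s} + 12^{-s}) · ∏_p (1 - p^{-s}), where λ is the Liouville function and λ_α its α-contraction. -/
open Finset

/-- The α-contraction of the Liouville function `λ(m) = (-1)^Ω(m)`. -/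
noncomputable def liouvilleAlpha (n : ℕ) : ℤ :=
  ∑ m ∈ (Icc 1 (Nat.fib n)).filter (fun m => fibAlpha m = n),
    (-1 : ℤ) ^ (ArithmeticFunction.cardFactors m)

/-!
Since `m ∣ F n` exactly when `α m ∣ n`, grouping the divisors `m` of `F n` by `α m` gives
`∑ d ∣ n, λ_α d = ∑ m ∣ F n, λ m`, which is `1` if `F n` is a square and `0` otherwise. Once the
square Fibonacci numbers are known to be `F 1`, `F 2` and `F 12`, Möbius inversion multiplies
`1 + 2 ^ (-s) + 12 ^ (-s)` by the Dirichlet series of `μ`, which is `1 / ζ s`.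

The square Fibonacci numbers are found by Cohn's method. For even `k`, every sequence with the
Fibonacci recurrence changes sign modulo the Lucas number `L k` when the index moves by `2 * k`.
If moreover `3 ∤ k`, then `L k ≡ 3 [MOD 4]`, so `-c ^ 2` is not a square modulo `L k` for `c`
coprime to `L k`. Hence a term `c ^ 2` with `c ∣ 2` prevents the terms at a nonzero multiple of `4`
away from being squares, and so does one with `c ∣ 6` for nonzero multiples of `8`. This settles odd
indices and determines which `L n` and `2 * L n` are squares; even indices follow from
`F (2 * n) = F n * L n`, where the factors have greatest common divisor `1` or `2`.
-/

theorem isSquare_gcd_mul_right {a b : ℕ} (h : IsSquare (a * b)) : IsSquare (a.gcd b * b) := by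
  obtain hg | hg := Nat.eq_zero_or_pos (a.gcd b)
  · simp [hg]
  obtain ⟨a', b', hcop, ha, hb⟩ := Nat.exists_coprime a b
  generalize a.gcd b = g at *
  subst ha hb
  obtain ⟨x, hx⟩ := h
  obtain ⟨y, rfl⟩ : g ∣ x := by
    rw [← Nat.pow_dvd_pow_iff two_ne_zero]
    exact ⟨a' * b', by rw [sq x, ← hx]; ring⟩
  have hprod : b' * a' = y ^ 2 := by
    refine Nat.eq_of_mul_eq_mul_left (pow_pos hg 2) ?_
    linarith
  obtain ⟨z, rfl⟩ := exists_eq_pow_of_mul_eq_pow (Nat.isUnit_iff.2 hcop.symm) hprod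
  exact ⟨g * z, by ring⟩

theorem isSquare_mul_iff_of_coprime {a b : ℕ} (hab : a.Coprime b) :
    IsSquare (a * b) ↔ IsSquare a ∧ IsSquare b := by
  refine ⟨fun h => ⟨?_, ?_⟩, fun h => h.1.mul h.2⟩
  · simpa only [Nat.Coprime.gcd_eq_one hab.symm, one_mul] using
      isSquare_gcd_mul_right (by rwa [mul_comm] : IsSquare (b * a))
  · simpa only [hab.gcd_eq_one, one_mul] using isSquare_gcd_mul_right h

theorem isSquare_prime_pow_iff {p : ℕ} (hp : p.Prime) {e : ℕ} : IsSquare (p ^ e) ↔ Even e := by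
  refine ⟨?_, fun he => he.isSquare_pow p⟩
  rintro ⟨r, hr⟩
  obtain ⟨k, -, rfl⟩ := (Nat.dvd_prime_pow hp).1 (Dvd.intro r hr.symm)
  exact ⟨k, Nat.pow_right_injective hp.two_le (hr.trans (pow_add p k k).symm)⟩

theorem not_isSquare_neg_sq {Q : ℕ} (hQ : Q % 4 = 3) {c : ℤ} (hc : IsCoprime c Q) :
    ¬ IsSquare (-(c : ZMod Q) ^ 2) := by
  have hJ : jacobiSym (-1 * c ^ 2) Q = -1 := by
    rw [jacobiSym.mul_left, jacobiSym.at_neg_one (Nat.odd_iff.2 (by lia)),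
      ZMod.χ₄_nat_three_mod_four hQ, jacobiSym.pow_left,
      jacobiSym.sq_one (Int.isCoprime_iff_gcd_eq_one.1 hc), mul_one]
  simpa using ZMod.nonsquare_of_jacobiSym_eq_neg_one hJ

theorem exists_eq_odd_mul_two_mul {N : ℤ} (hN : 4 ∣ N) (hN0 : N ≠ 0) :
    ∃ (q : ℤ) (k : ℕ), Odd q ∧ Even k ∧ ¬ 3 ∣ k ∧ N = q * (2 * k) := by
  obtain ⟨e, M, hM3, hM⟩ :=
    Nat.exists_eq_pow_mul_and_not_dvd (Int.natAbs_ne_zero.2 hN0) 3 (by norm_num)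
  have hM4 : 4 ∣ M := by
    refine (Nat.Coprime.pow_right e (by norm_num : Nat.Coprime 4 3)).dvd_of_dvd_mul_left ?_
    exact hM ▸ Int.natCast_dvd.1 hN
  obtain ⟨j, rfl⟩ := hM4
  have hodd : Odd ((3 : ℤ) ^ e) := Odd.pow (by decide)
  have hsign : Odd N.sign := by
    rcases lt_or_gt_of_ne hN0 with h | h
    · simp [Int.sign_eq_neg_one_of_neg h]
    · simp [Int.sign_eq_one_of_pos h]
  refine ⟨N.sign * 3 ^ e, 2 * j, hsign.mul hodd, even_two_mul j, by lia, ?_⟩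
  calc N = N.sign * N.natAbs := (Int.sign_mul_natAbs N).symm
    _ = N.sign * 3 ^ e * (2 * (2 * j : ℕ)) := by rw [hM]; push_cast; ring

theorem apply_emod_of_periodic {α : Type*} {f : ℤ → α} {T : ℤ} (hf : Function.Periodic f T)
    (n : ℤ) : f (n % T) = f n := by
  rw [Int.emod_def, mul_comm]
  exact hf.sub_int_mul_eq (n / T)

/-- A two-sided sequence satisfying the Fibonacci recurrence. Indexing by `ℤ` lets the Fibonacci and
Lucas sequences be compared with their values at negative indices. -/
def IsFibonacciLike {R : Type*} [Add R] (u : ℤ → R) : Prop :=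
  ∀ n, u (n + 2) = u (n + 1) + u n

/-- The Lucas number `L n = F (n - 1) + F (n + 1)`, written so that `F (2 * n) = F n * L n` is
literally `Int.fib_two_mul`. -/
def lucas (n : ℤ) : ℤ := 2 * Int.fib (n + 1) - Int.fib n

theorem isFibonacciLike_fib : IsFibonacciLike Int.fib := fun n => by
  rw [Int.fib_add_two, add_comm]

theorem isFibonacciLike_lucas : IsFibonacciLike lucas := fun n => by
  have h := Int.fib_add_two (n + 1)
  rw [show n + 1 + 2 = n + 2 + 1 by ring] at h
  simp only [lucas, h, add_assoc n 1 1, one_add_one_eq_two]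
  linarith [Int.fib_add_two n]

theorem lucas_natCast (n : ℕ) : lucas n = (2 * (n + 1).fib - n.fib : ℕ) := by
  have hle : n.fib ≤ (n + 1).fib := Nat.fib_le_fib_succ
  have hcast : Int.fib (n + 1) = (n + 1).fib := by exact_mod_cast Int.fib_natCast (n + 1)
  rw [lucas, hcast, Int.fib_natCast]
  lia

namespace IsFibonacciLike

variable {R : Type*} [CommRing R] {u v : ℤ → R}

theorem intCast {w : ℤ → ℤ} (hw : IsFibonacciLike w) :
    IsFibonacciLike fun n => (w n : R) := fun n => by
  simp only [hw n, Int.cast_add]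

theorem const_mul (hu : IsFibonacciLike u) (a : R) : IsFibonacciLike fun n => a * u n :=
  fun n => by simp only [hu n, mul_add]

theorem comp_add_right (hu : IsFibonacciLike u) (k : ℤ) : IsFibonacciLike fun n => u (n + k) :=
  fun n => by simpa only [add_right_comm] using hu (n + k)

theorem ext (hu : IsFibonacciLike u) (hv : IsFibonacciLike v) (h₀ : u 0 = v 0) (h₁ : u 1 = v 1) :
    u = v := by
  suffices h : ∀ n, u n = v n ∧ u (n + 1) = v (n + 1) from funext fun n => (h n).1
  intro n
  induction n using Int.induction_on with
  | zero => exact ⟨h₀, h₁⟩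
  | succ n ih =>
    refine ⟨ih.2, ?_⟩
    rw [add_assoc, one_add_one_eq_two, hu, hv, ih.1, ih.2]
  | pred n ih =>
    have hu' := hu (-n - 1)
    have hv' := hv (-n - 1)
    rw [sub_add_cancel, show (-n - 1 + 2 : ℤ) = -n + 1 by ring] at hu' hv'
    rw [sub_add_cancel]
    refine ⟨?_, ih.1⟩
    linear_combination ih.2 - ih.1 - hu' + hv'

theorem periodic (hu : IsFibonacciLike u) {T : ℤ} (h₀ : u T = u 0) (h₁ : u (T + 1) = u 1) :
    Function.Periodic u T :=
  congrFun <| (hu.comp_add_right T).ext hu (by rwa [zero_add]) (by rwa [add_comm 1 T])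

theorem apply_add_add_apply_sub (hu : IsFibonacciLike u) (n : ℤ) (k : ℕ) :
    u (n + k) + (-1) ^ k * u (n - k) = lucas k * u n := by
  induction k using Nat.twoStepInduction with
  | zero =>
    have hL : (lucas 0 : R) = 2 := by norm_num [lucas]
    rw [Nat.cast_zero, add_zero, sub_zero, pow_zero, one_mul, hL, two_mul]
  | one =>
    have h := hu (n - 1)
    rw [sub_add_cancel, show n - 1 + 2 = n + 1 by ring] at h
    simp [lucas, h]
  | more k ih₀ ih₁ =>
    have hup := hu (n + k)
    have hdown := hu (n - k - 2)
    have hL : (lucas (k + 2) : R) = lucas (k + 1) + lucas k :=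
      isFibonacciLike_lucas.intCast (R := R) k
    rw [sub_add_cancel, show n - k - 2 + 1 = n - (k + 1 : ℤ) by ring] at hdown
    push_cast at ih₁ ⊢
    rw [← add_assoc, hup, hL, show n - (k + 2 : ℤ) = n - k - 2 by ring, add_mul, ← ih₀, ← ih₁,
      hdown, ← add_assoc n]
    ring

theorem antiperiodic (hu : IsFibonacciLike u) {k : ℕ} (hk : Even k) (hL : (lucas k : R) = 0) :
    Function.Antiperiodic u (2 * k : ℤ) := fun n => by
  have h := hu.apply_add_add_apply_sub (n + k) k
  rw [hL, zero_mul, hk.neg_one_pow, one_mul, add_sub_cancel_right, add_assoc, ← two_mul] at h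
  exact eq_neg_of_add_eq_zero_left h

end IsFibonacciLike

theorem lucas_modEq_three {k : ℤ} (hk : Even k) (h3 : ¬ 3 ∣ k) : lucas k ≡ 3 [ZMOD 4] := by
  have hper : Function.Periodic (fun n => (lucas n : ZMod 4)) 6 :=
    isFibonacciLike_lucas.intCast.periodic (by decide) (by decide)
  have hmod : k % 6 = 2 ∨ k % 6 = 4 := by grind
  refine (ZMod.intCast_eq_intCast_iff (lucas k) 3 4).1 ?_
  rw [← apply_emod_of_periodic hper]
  rcases hmod with h | h <;> rw [h] <;> decide

theorem not_three_dvd_lucas {k : ℤ} (hk : 4 ∣ k) : ¬ 3 ∣ lucas k := by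
  have hper : Function.Periodic (fun n => (lucas n : ZMod 3)) 8 :=
    isFibonacciLike_lucas.intCast.periodic (by decide) (by decide)
  have hmod : k % 8 = 0 ∨ k % 8 = 4 := by lia
  rw [← Nat.cast_ofNat, ← ZMod.intCast_zmod_eq_zero_iff_dvd, ← apply_emod_of_periodic hper]
  rcases hmod with h | h <;> rw [h] <;> decide

theorem not_isSquare_lucas_of_even {n : ℤ} (hn : Even n) : ¬ IsSquare (lucas n) := by
  have hper : Function.Periodic (fun n => (lucas n : ZMod 8)) 12 :=
    isFibonacciLike_lucas.intCast.periodic (by decide) (by decide)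
  have hmod : n % 12 ∈ ({0, 2, 4, 6, 8, 10} : Finset ℤ) := by
    simp only [mem_insert, mem_singleton]; grind
  have hres : ∀ r ∈ ({0, 2, 4, 6, 8, 10} : Finset ℤ), ¬ IsSquare (lucas r : ZMod 8) := by decide
  exact fun h => hres _ hmod <|
    (apply_emod_of_periodic hper n).symm ▸ h.map (Int.castRingHom (ZMod 8))

theorem not_isSquare_two_mul_lucas_of_odd {n : ℤ} (hn : Odd n) : ¬ IsSquare (2 * lucas n) := by
  have hper : Function.Periodic (fun n => ((2 * lucas n : ℤ) : ZMod 16)) 12 :=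
    (isFibonacciLike_lucas.const_mul 2).intCast.periodic (by decide) (by decide)
  have hmod : n % 12 ∈ ({1, 3, 5, 7, 9, 11} : Finset ℤ) := by
    simp only [mem_insert, mem_singleton]; grind
  have hres : ∀ r ∈ ({1, 3, 5, 7, 9, 11} : Finset ℤ),
      ¬ IsSquare ((2 * lucas r : ℤ) : ZMod 16) := by decide
  exact fun h => hres _ hmod <|
    (apply_emod_of_periodic hper n).symm ▸ h.map (Int.castRingHom (ZMod 16))

theorem isCoprime_two_lucas {k : ℤ} (hk : Even k) (h3 : ¬ 3 ∣ k) : IsCoprime 2 (lucas k) := by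
  have h := lucas_modEq_three hk h3
  rw [Int.prime_two.coprime_iff_not_dvd]
  grind [Int.ModEq]

theorem isCoprime_six_lucas {k : ℤ} (hk : 4 ∣ k) (h3 : ¬ 3 ∣ k) : IsCoprime 6 (lucas k) := by
  have heven : Even k := even_iff_two_dvd.2 (by lia)
  have hthree : IsCoprime 3 (lucas k) :=
    (Int.prime_three.coprime_iff_not_dvd).2 (not_three_dvd_lucas hk)
  exact (isCoprime_two_lucas heven h3).mul_left hthree

theorem IsFibonacciLike.not_isSquare_apply_add {u : ℤ → ℤ} (hu : IsFibonacciLike u) {m N c : ℤ}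
    (hN : 4 ∣ N) (hN0 : N ≠ 0) (hm : u m = c ^ 2) (hc : c ∣ 2 ∨ c ∣ 6 ∧ 8 ∣ N) :
    ¬ IsSquare (u (m + N)) := by
  obtain ⟨q, k, hq, hk, hk3, rfl⟩ := exists_eq_odd_mul_two_mul hN hN0
  have hkZ : Even (k : ℤ) := by exact_mod_cast hk
  have hk3Z : ¬ 3 ∣ (k : ℤ) := by exact_mod_cast hk3
  have hcop : IsCoprime c (lucas k) := by
    rcases hc with hc2 | ⟨hc6, h8⟩
    · exact (isCoprime_two_lucas hkZ hk3Z).of_isCoprime_of_dvd_left hc2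
    · have h4 : (4 : ℤ) ∣ k := by
        have h : (8 : ℤ) ∣ 2 * k :=
          ((Int.isCoprime_two_left.2 hq).pow_left (m := 3)).dvd_of_dvd_mul_left h8
        lia
      exact (isCoprime_six_lucas h4 hk3Z).of_isCoprime_of_dvd_left hc6
  obtain ⟨Q, hQ⟩ : ∃ Q : ℕ, lucas k = Q := ⟨_, lucas_natCast k⟩
  have hQ4 : Q % 4 = 3 := by
    have h := lucas_modEq_three hkZ hk3Z
    rw [hQ] at h
    exact_mod_cast h
  have hanti : Function.Antiperiodic (fun n => (u n : ZMod Q)) (2 * k : ℤ) :=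
    hu.intCast.antiperiodic hk (by simp [hQ])
  have hreflect : (u (m + q * (2 * k)) : ZMod Q) = -(c : ZMod Q) ^ 2 := by
    obtain ⟨t, rfl⟩ := hq
    have h := hanti.int_odd_mul_antiperiodic t m
    rw [Int.cast_id, show t * (2 * (2 * k)) + 2 * k = (2 * t + 1) * (2 * k : ℤ) by ring] at h
    rw [h, hm, Int.cast_pow]
  exact fun h => not_isSquare_neg_sq hQ4 (hQ ▸ hcop) <|
    hreflect ▸ h.map (Int.castRingHom (ZMod Q))

theorem isSquare_lucas_iff {n : ℤ} : IsSquare (lucas n) ↔ n = 1 ∨ n = 3 := by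
  constructor
  · intro h
    have hL := isFibonacciLike_lucas
    have hmod : Even n ∨ 4 ∣ n - 1 ∨ 4 ∣ n - 3 := by grind
    by_contra! hne
    rcases hmod with heven | h1 | h3
    · exact not_isSquare_lucas_of_even heven h
    · refine hL.not_isSquare_apply_add (m := 1) (c := 1) h1 (by lia) (by decide) (by norm_num) ?_
      rwa [add_sub_cancel]
    · refine hL.not_isSquare_apply_add (m := 3) (c := 2) h3 (by lia) (by decide) (by norm_num) ?_
      rwa [add_sub_cancel]
  · rintro (rfl | rfl)
    exacts [⟨1, by decide⟩, ⟨2, by decide⟩]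

theorem isSquare_two_mul_lucas_iff {n : ℤ} :
    IsSquare (2 * lucas n) ↔ n = 0 ∨ n = 6 ∨ n = -6 := by
  constructor
  · intro h
    have hL := isFibonacciLike_lucas.const_mul 2
    have hmod : Odd n ∨ 4 ∣ n ∨ 8 ∣ n - 6 ∨ 8 ∣ n - (-6) := by grind
    by_contra! hne
    rcases hmod with hodd | h0 | h6 | h6
    · exact not_isSquare_two_mul_lucas_of_odd hodd h
    · refine hL.not_isSquare_apply_add (m := 0) (c := 2) h0 (by lia) (by decide) (by norm_num) ?_
      rwa [zero_add]
    · refine hL.not_isSquare_apply_add (m := 6) (c := 6) (by lia) (by lia) (by decide)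
        (.inr ⟨dvd_rfl, h6⟩) ?_
      rwa [add_sub_cancel]
    · refine hL.not_isSquare_apply_add (m := -6) (c := 6) (by lia) (by lia) (by decide)
        (.inr ⟨dvd_rfl, h6⟩) ?_
      rwa [add_sub_cancel]
  · rintro (rfl | rfl | rfl)
    exacts [⟨2, by decide⟩, ⟨6, by decide⟩, ⟨6, by decide⟩]

theorem eq_one_or_neg_one_of_isSquare_fib_of_odd {n : ℤ} (hn : Odd n) (h : IsSquare (Int.fib n)) :
    n = 1 ∨ n = -1 := by
  have hF := isFibonacciLike_fib
  have hmod : 4 ∣ n - 1 ∨ 4 ∣ n - (-1) := by grind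
  by_contra! hne
  rcases hmod with h1 | h1
  · refine hF.not_isSquare_apply_add (m := 1) (c := 1) h1 (by lia) (by decide) (by norm_num) ?_
    rwa [add_sub_cancel]
  · refine hF.not_isSquare_apply_add (m := -1) (c := 1) h1 (by lia) (by decide) (by norm_num) ?_
    rwa [add_sub_cancel]

theorem gcd_fib_two_mul_fib_succ_sub_fib (m : ℕ) :
    m.fib.gcd (2 * (m + 1).fib - m.fib) = m.fib.gcd 2 := by
  have hle : m.fib ≤ 2 * (m + 1).fib :=
    Nat.fib_le_fib_succ.trans (Nat.le_mul_of_pos_left _ two_pos)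
  rw [Nat.gcd_sub_self_right hle, (Nat.fib_coprime_fib_succ m).symm.gcd_mul_right_cancel_right]

theorem eq_of_isSquare_fib_two_mul {m : ℕ} (h : IsSquare (2 * m).fib) : m = 0 ∨ m = 1 ∨ m = 6 := by
  rw [Nat.fib_two_mul] at h
  have hL := isSquare_gcd_mul_right h
  rw [gcd_fib_two_mul_fib_succ_sub_fib, ← Int.isSquare_natCast_iff, Nat.cast_mul,
    ← lucas_natCast] at hL
  rcases (Nat.dvd_prime Nat.prime_two).1 (m.fib.gcd_dvd_right 2) with hg | hg <;> rw [hg] at hL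
  · rw [Nat.cast_one, one_mul, isSquare_lucas_iff] at hL
    rcases hL with hm | hm
    · lia
    · obtain rfl : m = 3 := by lia
      exact absurd h (by norm_num)
  · rw [Nat.cast_ofNat, isSquare_two_mul_lucas_iff] at hL
    lia

theorem isSquare_fib_iff {n : ℕ} : IsSquare n.fib ↔ n = 0 ∨ n = 1 ∨ n = 2 ∨ n = 12 := by
  refine ⟨fun h => ?_, by rintro (rfl | rfl | rfl | rfl) <;> norm_num⟩
  rcases n.even_or_odd' with ⟨m, rfl | rfl⟩
  · have hm := eq_of_isSquare_fib_two_mul h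
    lia
  · have hm := eq_one_or_neg_one_of_isSquare_fib_of_odd (n := (2 * m + 1 : ℕ))
      ⟨m, by push_cast; rfl⟩ (Int.isSquare_natCast_iff.2 h)
    lia

open ArithmeticFunction in
theorem sum_divisors_liouville {n : ℕ} (hn : n ≠ 0) :
    ∑ d ∈ n.divisors, liouville d = if IsSquare n then 1 else 0 := by
  simp only [← coe_mul_zeta_apply]
  induction n using Nat.recOnPrimeCoprime with
  | zero => exact absurd rfl hn
  | prime_pow p e hp =>
    have hpow (i : ℕ) : liouville (p ^ i) = (-1) ^ i := by
      rw [liouville_apply (pow_ne_zero i hp.ne_zero), cardFactors_apply_prime_pow hp]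
    simp only [coe_mul_zeta_apply, Nat.sum_divisors_prime_pow hp, hpow, neg_one_geom_sum,
      isSquare_prime_pow_iff hp, Nat.even_add_one, ite_not]
  | coprime a b ha hb hab iha ihb =>
    have hmul := isMultiplicative_liouville.mul (isMultiplicative_zeta.natCast (R := ℤ))
    rw [hmul.map_mul_of_coprime hab, iha (by lia), ihb (by lia)]
    simp only [isSquare_mul_iff_of_coprime hab, ← ite_and, mul_ite, mul_one, mul_zero]
    grind

theorem dvd_fib_iff_fibAlpha_dvd {m n : ℕ} : m ∣ n.fib ↔ fibAlpha m ∣ n := by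
  rcases n.eq_zero_or_pos with rfl | hn
  · simp
  have hspec {k : ℕ} (hk : 0 < k ∧ m ∣ k.fib) : 0 < fibAlpha m ∧ m ∣ (fibAlpha m).fib :=
    Nat.sInf_mem (s := {k | 0 < k ∧ m ∣ k.fib}) ⟨k, hk⟩
  constructor
  · intro hm
    obtain ⟨hpos, hdvd⟩ := hspec ⟨hn, hm⟩
    have hgcd : m ∣ ((fibAlpha m).gcd n).fib := Nat.fib_gcd _ _ ▸ Nat.dvd_gcd hdvd hm
    have hle : fibAlpha m ≤ (fibAlpha m).gcd n :=
      Nat.sInf_le ⟨Nat.gcd_pos_of_pos_left n hpos, hgcd⟩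
    exact Nat.gcd_eq_left_iff_dvd.1 ((Nat.gcd_le_left n hpos).antisymm hle)
  · intro hα
    obtain ⟨k, hk⟩ := Nat.nonempty_of_pos_sInf (Nat.pos_of_dvd_of_pos hα hn)
    exact (hspec hk).2.trans (Nat.fib_dvd _ _ hα)

theorem filter_Icc_fib_eq_filter_divisors_fib {d n : ℕ} (hd : d ∈ n.divisors) :
    {m ∈ Icc 1 d.fib | fibAlpha m = d} = {m ∈ n.fib.divisors | fibAlpha m = d} := by
  have hdn : d ∣ n := Nat.dvd_of_mem_divisors hd
  have hfd : 0 < d.fib := Nat.fib_pos.2 (Nat.pos_of_mem_divisors hd)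
  have hfn : n.fib ≠ 0 := (Nat.fib_pos.2 (Nat.pos_of_ne_zero (Nat.ne_zero_of_mem_divisors hd))).ne'
  ext m
  simp only [mem_filter, mem_Icc, Nat.mem_divisors]
  refine and_congr_left fun hα => ?_
  have hm : m ∣ d.fib := dvd_fib_iff_fibAlpha_dvd.2 hα.dvd
  have hmn : m ∣ n.fib := hm.trans (Nat.fib_dvd _ _ hdn)
  exact iff_of_true ⟨Nat.pos_of_dvd_of_pos hm hfd, Nat.le_of_dvd hfd hm⟩ ⟨hmn, hfn⟩

theorem sum_divisors_sum_fibAlpha_eq {M : Type*} [AddCommMonoid M] (f : ℕ → M) (n : ℕ) :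
    ∑ d ∈ n.divisors, ∑ m ∈ Icc 1 d.fib with fibAlpha m = d, f m = ∑ m ∈ n.fib.divisors, f m := by
  rcases eq_or_ne n 0 with rfl | hn
  · simp
  rw [sum_congr rfl fun d hd => by rw [filter_Icc_fib_eq_filter_divisors_fib hd]]
  refine sum_fiberwise_of_maps_to (fun m hm => ?_) f
  exact Nat.mem_divisors.2 ⟨dvd_fib_iff_fibAlpha_dvd.1 (Nat.dvd_of_mem_divisors hm), hn⟩

theorem sum_divisors_liouvilleAlpha {n : ℕ} (hn : n ≠ 0) :
    ∑ d ∈ n.divisors, liouvilleAlpha d = if n ∈ ({1, 2, 12} : Finset ℕ) then 1 else 0 := by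
  have hfib : n.fib ≠ 0 := (Nat.fib_pos.2 (Nat.pos_of_ne_zero hn)).ne'
  have hsquare : IsSquare n.fib ↔ n ∈ ({1, 2, 12} : Finset ℕ) := by
    simp [isSquare_fib_iff, hn]
  calc ∑ d ∈ n.divisors, liouvilleAlpha d
      = ∑ m ∈ n.fib.divisors, (-1) ^ ArithmeticFunction.cardFactors m :=
        sum_divisors_sum_fibAlpha_eq _ n
    _ = ∑ m ∈ n.fib.divisors, ArithmeticFunction.liouville m :=
        sum_congr rfl fun m hm =>
          (ArithmeticFunction.liouville_apply (Nat.pos_of_mem_divisors hm).ne').symm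
    _ = if n ∈ ({1, 2, 12} : Finset ℕ) then 1 else 0 := by
        simp only [sum_divisors_liouville hfib, hsquare]

theorem LSeriesHasSum_finset_indicator {S : Finset ℕ} (hS : 0 ∉ S) (s : ℂ) :
    LSeriesHasSum (fun n => if n ∈ S then 1 else 0) s (∑ n ∈ S, (n : ℂ) ^ (-s)) := by
  have hterm : ∀ n ∈ S, LSeries.term (fun n => if n ∈ S then 1 else 0) s n = (n : ℂ) ^ (-s) := by
    intro n hn
    rw [LSeries.term_of_ne_zero (ne_of_mem_of_not_mem hn hS), if_pos hn, one_div, Complex.cpow_neg]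
  rw [← sum_congr rfl hterm]
  exact hasSum_sum_of_ne_finset_zero fun n hn => by simp [LSeries.term_def, hn]

theorem LSeriesHasSum_moebius {s : ℂ} (hs : 1 < s.re) :
    LSeriesHasSum (fun n => (ArithmeticFunction.moebius n : ℂ)) s (riemannZeta s)⁻¹ := by
  have hmul := ArithmeticFunction.LSeries_zeta_mul_Lseries_moebius hs
  rw [ArithmeticFunction.LSeries_zeta_eq_riemannZeta hs] at hmul
  rw [← eq_inv_of_mul_eq_one_right hmul]
  exact (ArithmeticFunction.LSeriesSummable_moebius_iff.2 hs).LSeriesHasSum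

theorem LSeriesHasSum_of_sum_divisors_eq {f g : ℕ → ℂ} {s a : ℂ} (hs : 1 < s.re)
    (hfg : ∀ n > 0, ∑ d ∈ n.divisors, f d = g n) (hg : LSeriesHasSum g s a) :
    LSeriesHasSum f s (a * (riemannZeta s)⁻¹) := by
  have hinv := ArithmeticFunction.sum_eq_iff_sum_mul_moebius_eq.1 hfg
  have hconv := (LSeriesHasSum_moebius hs).convolution hg
  rw [mul_comm a]
  refine (LSeriesHasSum_congr s _ fun {n} hn => ?_).1 hconv
  rw [LSeries.convolution_def]
  exact hinv n (Nat.pos_of_ne_zero hn)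

theorem tprod_one_sub_prime_cpow_neg {s : ℂ} (hs : 1 < s.re) :
    ∏' p : Nat.Primes, (1 - (p : ℂ) ^ (-s)) = (riemannZeta s)⁻¹ := by
  have h := (riemannZeta_eulerProduct_hasProd hs).inv₀ (riemannZeta_ne_zero_of_one_lt_re hs)
  simpa only [inv_inv] using h.tprod_eq

theorem LSeriesHasSum_liouvilleAlpha {s : ℂ} (hs : 1 < s.re) :
    LSeriesHasSum (fun n => (liouvilleAlpha n : ℂ)) s
      ((∑ n ∈ ({1, 2, 12} : Finset ℕ), (n : ℂ) ^ (-s)) * (riemannZeta s)⁻¹) := by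
  refine LSeriesHasSum_of_sum_divisors_eq hs (fun n hn => ?_)
    (LSeriesHasSum_finset_indicator (by decide) s)
  exact_mod_cast congrArg (Int.cast : ℤ → ℂ) (sum_divisors_liouvilleAlpha hn.ne')

theorem liouvilleAlpha_dirichlet_series (s : ℂ) (hs : 1 < s.re) :
    ∑' n : ℕ, (liouvilleAlpha n : ℂ) / (n : ℂ) ^ s
      = (1 + (2 : ℂ) ^ (-s) + (12 : ℂ) ^ (-s)) *
          ∏' p : Nat.Primes, (1 - (p : ℂ) ^ (-s)) := by
  have hsum : ∑ n ∈ ({1, 2, 12} : Finset ℕ), (n : ℂ) ^ (-s)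
      = 1 + (2 : ℂ) ^ (-s) + (12 : ℂ) ^ (-s) := by
    simp [add_assoc]
  have hLSeries : LSeries (fun n => (liouvilleAlpha n : ℂ)) s
      = ∑' n : ℕ, (liouvilleAlpha n : ℂ) / (n : ℂ) ^ s := by
    rw [LSeries_def₀ (by simp [liouvilleAlpha])]
  rw [← hLSeries, (LSeriesHasSum_liouvilleAlpha hs).LSeries_eq, hsum,
    tprod_one_sub_prime_cpow_neg hs]
end
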